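/- arXiv:1804.02065 — 3 statements merged into one kernel-verified Lean document; each statement's English description precedes it below -/
import Mathlib

section
/- The number of alternating ordered rooted trees of type I on n+1 vertices, labeled bijectively by {1,...,n+1}, equals n^n. -/
/-- Ordered (plane) rooted trees with natural-number labels. -/
inductive LTree : Type
  | node : ℕ → List LTree → LTree

namespace LTree

/-- The list of labels of a labeled ordered rooted tree (root first, depth-first). -/
def labels : LTree → List ℕ
  | .node a ts => a :: (ts.attach.map (fun x => labels x.1)).flatten
decreasing_by
  have := List.sizeOf_lt_of_mem x.2
  simp_wf
  omega

/-- `altFrom a d t` : the labels alternate along every path down `t`, where `a`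
is the label of the parent of the root of `t`; if `d = true` the root label must
be smaller than `a` (a descent), otherwise larger (an ascent). -/
def altFrom : ℕ → Bool → LTree → Prop
  | a, d, .node c ts =>
      (if d then c < a else a < c) ∧ ∀ x ∈ ts.attach, altFrom c (!d) x.1
termination_by _ _ t => sizeOf t
decreasing_by
  have := List.sizeOf_lt_of_mem x.2
  simp_wf
  omega

/-- Alternating of type I: along every path from the root the labels satisfy
`x₁ > x₂ < x₃ > x₄ < …`. -/
def AltI : LTree → Prop
  | .node a ts => ∀ t ∈ ts, altFrom a true t

/-- Alternating of type II: `x₁ < x₂ > x₃ < …`. -/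
def AltII : LTree → Prop
  | .node a ts => ∀ t ∈ ts, altFrom a false t

/-- A labeled ordered rooted tree on `n+1` vertices, labeled bijectively by `{1,…,n+1}`. -/
def Valid (n : ℕ) (t : LTree) : Prop :=
  t.labels.Nodup ∧ t.labels.length = n + 1 ∧ ∀ a ∈ t.labels, a ∈ Finset.Icc 1 (n + 1)

end LTree

theorem LTaux_alg {R : Type*} [CommRing R] (N : ℕ) (x U V : ℕ → R)
    (hU : ∀ k ≤ N, U k * (1 - ∑ b ∈ Finset.range k, x b * V b) = 1)
    (hV : ∀ k < N, V k * (1 - ∑ b ∈ Finset.Ico (k+1) N, x b * U b) = 1) :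
    (1 - ∑ b ∈ Finset.range N, x b * U b) * U N = 1 ∧
      ∏ b ∈ Finset.range N, (1 + x b * U N) = U N := by
  set c := 1 - ∑ b ∈ Finset.range N, x b * U b with hc
  set P : ℕ → R := fun k => 1 - ∑ b ∈ Finset.range k, x b * V b with hP
  set Q : ℕ → R := fun k => 1 - ∑ b ∈ Finset.Ico k N, x b * U b with hQ
  have hP1 : ∀ k, P (k+1) = P k - x k * V k := by
    intro k; simp only [hP, Finset.sum_range_succ]; ring
  have hQ1 : ∀ k < N, Q k = Q (k+1) - x k * U k := by
    intro k hk; simp only [hQ, Finset.sum_eq_sum_Ico_succ_bot hk]; ring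
  have hU' : ∀ k ≤ N, U k * P k = 1 := hU
  have hV' : ∀ k < N, V k * Q (k+1) = 1 := hV
  have hP0 : P 0 = 1 := by simp [hP]
  have hQN : Q N = 1 := by simp [hQ]
  have hQ0 : Q 0 = c := by simp [hQ, hc]
  have hPQ : ∀ k ≤ N, P k * Q k = c := by
    intro k
    induction k with
    | zero => intro _; rw [hP0, hQ0, one_mul]
    | succ k ih =>
      intro hk
      have h := ih (by omega)
      have h1 := hU' k (by omega)
      have h2 := hV' k (by omega)
      rw [hQ1 k (by omega)] at h
      rw [hP1]
      linear_combination h + x k * h1 - x k * h2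
  have hPN : P N = c := by have := hPQ N le_rfl; rwa [hQN, mul_one] at this
  have hcE : c * U N = 1 := by rw [← hPN, mul_comm]; exact hU' N le_rfl
  refine ⟨hcE, ?_⟩
  have step : ∀ k < N, P (k+1) * (1 + x k * U N) = P k := by
    intro k hk
    have h := hPQ (k+1) hk
    have h2 := hV' k hk
    have h3 := hP1 k
    have h4 : V k * c = P (k+1) := by rw [← h]; linear_combination P (k+1) * h2
    have h5 : P (k+1) * U N = V k := by rw [← h4]; linear_combination V k * hcE
    linear_combination h3 + x k * h5
  have tel : ∀ k ≤ N, P k * ∏ b ∈ Finset.range k, (1 + x b * U N) = 1 := by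
    intro k
    induction k with
    | zero => intro _; simp [hP0]
    | succ k ih =>
      intro hk
      rw [Finset.prod_range_succ]
      have := ih (by omega)
      have h := step k (by omega)
      linear_combination this + (∏ b ∈ Finset.range k, (1 + x b * U N)) * h
  have h := tel N le_rfl
  rw [hPN] at h
  linear_combination U N * h - (∏ b ∈ Finset.range N, (1 + x b * U N)) * hcE

/-- the coefficient formula -/
def LTaux_e (r : ℤ) (n : ℕ) : ℤ := if n = 0 then 1 else r * (r + n) ^ (n - 1)

theorem LTaux_num (r : ℤ) (n : ℕ) :
    ∑ k ∈ Finset.range (n+1), (n.choose k : ℤ) * (r ^ k * LTaux_e k (n - k)) = LTaux_e r n := by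
  rcases n with _ | n
  · simp [LTaux_e]
  rw [Finset.sum_range_succ']
  have h0 : LTaux_e (0:ℕ) (n+1-0) = 0 := by simp [LTaux_e]
  rw [h0]
  have : LTaux_e r (n+1) = r * (r + (n+1:ℕ)) ^ n := by simp [LTaux_e]
  rw [this, add_pow, Finset.mul_sum]
  simp only [mul_zero, add_zero]
  apply Finset.sum_congr rfl
  intro j hj
  rw [Finset.mem_range] at hj
  have hch : ((n+1).choose (j+1) : ℤ) * (j+1) = (n+1) * n.choose j := by
    exact_mod_cast (Nat.add_one_mul_choose_eq n j).symm
  by_cases hjn : j = n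
  · subst hjn; simp [LTaux_e]; ring
  · obtain ⟨m, rfl⟩ : ∃ m, n = j + 1 + m := ⟨n - (j+1), by omega⟩
    have e1 : j + 1 + m + 1 - (j+1) = m + 1 := by omega
    have e2 : j + 1 + m - j = m + 1 := by omega
    rw [e1, e2]
    simp only [LTaux_e, Nat.add_sub_cancel]
    push_cast at hch ⊢
    have e3 : ((j:ℤ) + 1 + (m+1)) = j + 1 + m + 1 := by ring
    rw [e3]
    linear_combination r^(j+1) * ((j:ℤ)+1+m+1)^m * hch

/-- squarefree monomial exponent -/
noncomputable def LTaux_mon (S : Finset ℕ) : ℕ →₀ ℕ := ∑ a ∈ S, Finsupp.single a 1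

theorem LTaux_mon_apply (S : Finset ℕ) (a : ℕ) : LTaux_mon S a = if a ∈ S then 1 else 0 := by
  simp [LTaux_mon, Finsupp.finsetSum_apply, Finsupp.single_apply]

theorem LTaux_mon_le (K S : Finset ℕ) : LTaux_mon K ≤ LTaux_mon S ↔ K ⊆ S := by
  constructor
  · intro h a ha
    have := h a
    rw [LTaux_mon_apply, LTaux_mon_apply, if_pos ha] at this
    by_contra hc
    simp [hc] at this
  · intro h a
    rw [LTaux_mon_apply, LTaux_mon_apply]
    by_cases ha : a ∈ K
    · simp [ha, h ha]
    · simp [ha]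

theorem LTaux_mon_sub (K S : Finset ℕ) : LTaux_mon S - LTaux_mon K = LTaux_mon (S \ K) := by
  ext a
  rw [Finsupp.tsub_apply, LTaux_mon_apply, LTaux_mon_apply, LTaux_mon_apply]
  by_cases h1 : a ∈ S <;> by_cases h2 : a ∈ K <;> simp [h1, h2]

theorem LTaux_prodX (K : Finset ℕ) :
    ∏ a ∈ K, (MvPowerSeries.X a : MvPowerSeries ℕ ℤ) = MvPowerSeries.monomial (LTaux_mon K) 1 := by
  classical
  induction K using Finset.induction_on with
  | empty => simp [LTaux_mon]
  | insert a K ha ih =>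
    have h : LTaux_mon (insert a K) = Finsupp.single a 1 + LTaux_mon K := by
      simp [LTaux_mon, Finset.sum_insert ha]
    rw [Finset.prod_insert ha, ih, h, MvPowerSeries.X,
      MvPowerSeries.monomial_mul_monomial, one_mul]

/-- The ideal generated by squares of variables -/
noncomputable def LTaux_I : Ideal (MvPowerSeries ℕ ℤ) :=
  Ideal.span (Set.range fun a => (MvPowerSeries.X a : MvPowerSeries ℕ ℤ) ^ 2)

theorem LTaux_I_coeff (f : MvPowerSeries ℕ ℤ) (hf : f ∈ LTaux_I) (S : Finset ℕ) :
    MvPowerSeries.coeff (LTaux_mon S) f = 0 := by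
  refine Submodule.span_induction (p := fun f _ => ∀ g, MvPowerSeries.coeff (LTaux_mon S) (g * f) = 0)
    ?_ ?_ ?_ ?_ hf 1 |> fun h => by simpa using h
  · rintro _ ⟨a, rfl⟩ g
    simp only []
    rw [MvPowerSeries.X_pow_eq, MvPowerSeries.coeff_mul_monomial, if_neg]
    intro h
    have := h a
    rw [LTaux_mon_apply] at this
    simp at this
    split_ifs at this <;> omega
  · simp
  · intro x y _ _ hx hy g
    rw [mul_add, map_add, hx, hy, add_zero]
  · intro a x _ hx g
    rw [smul_eq_mul, ← mul_assoc]; exact hx _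

theorem LTaux_sq_pow {R : Type*} [CommRing R] (y : R) (hy : y ^ 2 = 0) (r : ℕ) :
    (1 + y) ^ r = 1 + r * y := by
  induction r with
  | zero => simp
  | succ r ih => rw [pow_succ, ih]; push_cast; linear_combination r * hy

theorem LTaux_coeff_prod (E : MvPowerSeries ℕ ℤ) (I S : Finset ℕ) (hS : S ⊆ I) (r : ℤ) :
    MvPowerSeries.coeff (LTaux_mon S) (∏ a ∈ I, (1 + (r : MvPowerSeries ℕ ℤ) * (MvPowerSeries.X a * E))) =
      ∑ K ∈ S.powerset, r ^ K.card * MvPowerSeries.coeff (LTaux_mon (S \ K)) (E ^ K.card) := by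
  classical
  rw [Finset.prod_one_add, map_sum]
  have hterm : ∀ K : Finset ℕ, MvPowerSeries.coeff (LTaux_mon S)
      (∏ a ∈ K, ((r : MvPowerSeries ℕ ℤ) * (MvPowerSeries.X a * E))) =
      if K ⊆ S then r ^ K.card * MvPowerSeries.coeff (LTaux_mon (S \ K)) (E ^ K.card) else 0 := by
    intro K
    rw [Finset.prod_mul_distrib, Finset.prod_mul_distrib, Finset.prod_const, Finset.prod_const,
      LTaux_prodX]
    have : ((r : MvPowerSeries ℕ ℤ)) ^ K.card = MvPowerSeries.C (r ^ K.card) := by simp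
    rw [this, MvPowerSeries.coeff_C_mul, MvPowerSeries.coeff_monomial_mul]
    simp only [LTaux_mon_le, LTaux_mon_sub, one_mul]
    split_ifs <;> simp
  simp only [hterm]
  rw [← Finset.sum_filter]
  apply Finset.sum_congr _ (fun _ _ => rfl)
  ext K
  simp only [Finset.mem_filter, Finset.mem_powerset]
  exact ⟨fun h => h.2, fun h => ⟨h.trans hS, h⟩⟩

theorem LTaux_coeff_E (E : MvPowerSeries ℕ ℤ) (I : Finset ℕ)
    (hE : ∏ a ∈ I, (1 + MvPowerSeries.X a * E) = E) (c : MvPowerSeries ℕ ℤ) (hc : c * E = 1) :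
    MvPowerSeries.coeff (LTaux_mon I) c = LTaux_e (-1) I.card := by
  classical
  let q := Ideal.Quotient.mk LTaux_I
  have hsq : ∀ a, (q (MvPowerSeries.X a * E)) ^ 2 = 0 := by
    intro a
    rw [← map_pow, mul_pow, map_mul]
    have : q (MvPowerSeries.X a ^ 2) = 0 :=
      Ideal.Quotient.eq_zero_iff_mem.2 (Ideal.subset_span ⟨a, rfl⟩)
    rw [this, zero_mul]
  have hcong : ∀ f g : MvPowerSeries ℕ ℤ, q f = q g → ∀ S,
      MvPowerSeries.coeff (LTaux_mon S) f = MvPowerSeries.coeff (LTaux_mon S) g := by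
    intro f g h S
    have := LTaux_I_coeff _ (Ideal.Quotient.eq.1 h) S
    rw [map_sub] at this
    linarith
  have hpow : ∀ r : ℕ, q (E ^ r) =
      q (∏ a ∈ I, (1 + ((r:ℤ) : MvPowerSeries ℕ ℤ) * (MvPowerSeries.X a * E))) := by
    intro r
    have : q (E ^ r) = q ((∏ a ∈ I, (1 + MvPowerSeries.X a * E)) ^ r) := by rw [hE]
    rw [this, map_pow, map_prod, map_prod, ← Finset.prod_pow]
    apply Finset.prod_congr rfl
    intro a _
    have := LTaux_sq_pow _ (hsq a) r
    rw [map_add, map_one, this]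
    simp
  have hinv : q c = q (∏ a ∈ I, (1 + ((-1:ℤ) : MvPowerSeries ℕ ℤ) * (MvPowerSeries.X a * E))) := by
    have h1 : q c * q E = 1 := by rw [← map_mul, hc, map_one]
    have h2 : q E * q (∏ a ∈ I, (1 + ((-1:ℤ) : MvPowerSeries ℕ ℤ) * (MvPowerSeries.X a * E))) = 1 := by
      conv_lhs => enter [1]; rw [← hE]
      rw [map_prod, map_prod, ← Finset.prod_mul_distrib]
      apply Finset.prod_eq_one
      intro a _
      have := hsq a
      simp only [map_add, map_one, Int.cast_neg, Int.cast_one, neg_mul, one_mul, map_neg]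
      linear_combination -this
    generalize q (∏ a ∈ I, (1 + ((-1:ℤ) : MvPowerSeries ℕ ℤ) * (MvPowerSeries.X a * E))) = z at *
    linear_combination z * h1 - q c * h2
  have main : ∀ (S : Finset ℕ), S ⊆ I → (∀ K ⊆ S, K.Nonempty → ∀ r : ℕ,
      MvPowerSeries.coeff (LTaux_mon (S \ K)) (E ^ r) = LTaux_e r (S \ K).card) → ∀ r : ℤ,
      MvPowerSeries.coeff (LTaux_mon S)
        (∏ a ∈ I, (1 + (r : MvPowerSeries ℕ ℤ) * (MvPowerSeries.X a * E))) = LTaux_e r S.card := by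
    intro S hS ih r
    rw [LTaux_coeff_prod E I S hS, ← LTaux_num r S.card]
    have := Finset.sum_powerset_apply_card (fun k => r ^ k * LTaux_e k (S.card - k)) (x := S)
    simp only [nsmul_eq_mul] at this
    rw [← this]
    apply Finset.sum_congr rfl
    intro K hK
    rw [Finset.mem_powerset] at hK
    congr 1
    rcases K.eq_empty_or_nonempty with rfl | hne
    · rw [Finset.sdiff_empty, Finset.card_empty, pow_zero, MvPowerSeries.coeff_one,
        Nat.sub_zero, LTaux_e]
      rcases S.eq_empty_or_nonempty with rfl | ⟨a, ha⟩
      · simp [LTaux_mon]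
      · rw [if_neg, if_neg]
        · simp
        · exact (Finset.card_pos.2 ⟨a, ha⟩).ne'
        · intro h
          have := DFunLike.congr_fun h a
          rw [LTaux_mon_apply, if_pos ha] at this
          simp at this
    · rw [ih K hK hne, Finset.card_sdiff_of_subset hK]
  have all : ∀ n : ℕ, ∀ S : Finset ℕ, S ⊆ I → S.card = n → ∀ r : ℕ,
      MvPowerSeries.coeff (LTaux_mon S) (E ^ r) = LTaux_e r S.card := by
    intro n
    induction n using Nat.strong_induction_on with
    | _ n ih =>
      intro S hS hn r
      rw [hcong _ _ (hpow r)]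
      refine main S hS ?_ r
      intro K hK hne r'
      refine ih _ ?_ (S \ K) (Finset.sdiff_subset.trans hS) rfl r'
      rw [Finset.card_sdiff_of_subset hK]
      have := Finset.card_pos.2 hne
      have := Finset.card_le_card hK
      omega
  rw [hcong _ _ hinv]
  exact main I subset_rfl (fun K hK _ r => all _ _ Finset.sdiff_subset rfl r) (-1)

/-- generating function of a weighted class -/
noncomputable def LTaux_gf {α : Type*} (w : α → ℕ →₀ ℕ) : MvPowerSeries ℕ ℤ :=
  fun m => (Nat.card {x // w x = m} : ℤ)

theorem LTaux_coeff_gf {α : Type*} (w : α → ℕ →₀ ℕ) (m : ℕ →₀ ℕ) :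
    MvPowerSeries.coeff m (LTaux_gf w) = (Nat.card {x // w x = m} : ℤ) := rfl

theorem LTaux_gf_equiv {α β : Type*} (w : α → ℕ →₀ ℕ) (w' : β → ℕ →₀ ℕ) (e : α ≃ β)
    (h : ∀ x, w' (e x) = w x) : LTaux_gf w = LTaux_gf w' := by
  ext m
  rw [LTaux_coeff_gf, LTaux_coeff_gf]
  congr 1
  exact Nat.card_congr (e.subtypeEquiv (fun x => by rw [h]))

theorem LTaux_gf_unit (m : ℕ →₀ ℕ) :
    LTaux_gf (fun _ : Unit => m) = MvPowerSeries.monomial m 1 := by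
  classical
  ext k
  rw [LTaux_coeff_gf, MvPowerSeries.coeff_monomial]
  by_cases h : k = m
  · subst h
    simp
  · have : IsEmpty {x : Unit // m = k} := ⟨fun x => h x.2.symm⟩
    simp [h]

theorem LTaux_gf_sum {α β : Type*} (w : α → ℕ →₀ ℕ) (w' : β → ℕ →₀ ℕ)
    (h : ∀ m, Finite {x // w x = m}) (h' : ∀ m, Finite {x // w' x = m}) :
    LTaux_gf (Sum.elim w w') = LTaux_gf w + LTaux_gf w' := by
  ext m
  rw [map_add, LTaux_coeff_gf, LTaux_coeff_gf, LTaux_coeff_gf]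
  have := h m
  have := h' m
  rw [Nat.card_congr (Equiv.subtypeSum (p := fun x => Sum.elim w w' x = m))]
  simp only [Sum.elim_inl, Sum.elim_inr]
  rw [Nat.card_sum]
  push_cast; rfl

theorem LTaux_gf_sigma {ι : Type*} [Fintype ι] {α : ι → Type*} (w : ∀ i, α i → ℕ →₀ ℕ)
    (h : ∀ i m, Finite {x // w i x = m}) :
    LTaux_gf (fun x : Σ i, α i => w x.1 x.2) = ∑ i, LTaux_gf (w i) := by
  ext m
  rw [map_sum, LTaux_coeff_gf]
  simp only [LTaux_coeff_gf]
  have := fun i => h i m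
  let e : {x : Σ i, α i // w x.1 x.2 = m} ≃ Σ i, {y // w i y = m} :=
    { toFun := fun x => ⟨x.1.1, x.1.2, x.2⟩
      invFun := fun x => ⟨⟨x.1, x.2.1⟩, x.2.2⟩
      left_inv := fun _ => rfl
      right_inv := fun _ => rfl }
  rw [Nat.card_congr e, Nat.card_sigma]
  push_cast; rfl

theorem LTaux_gf_prod {α β : Type*} (w : α → ℕ →₀ ℕ) (w' : β → ℕ →₀ ℕ)
    (h : ∀ m, Finite {x // w x = m}) (h' : ∀ m, Finite {x // w' x = m}) :
    LTaux_gf (fun x : α × β => w x.1 + w' x.2) = LTaux_gf w * LTaux_gf w' := by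
  classical
  ext m
  rw [MvPowerSeries.coeff_mul, LTaux_coeff_gf]
  simp only [LTaux_coeff_gf]
  let e : {x : α × β // w x.1 + w' x.2 = m} ≃
      Σ p : {p // p ∈ Finset.HasAntidiagonal.antidiagonal m}, {x // w x = p.1.1} × {y // w' y = p.1.2} :=
    { toFun := fun x => ⟨⟨(w x.1.1, w' x.1.2), Finset.HasAntidiagonal.mem_antidiagonal.2 x.2⟩,
        ⟨x.1.1, rfl⟩, ⟨x.1.2, rfl⟩⟩
      invFun := fun x => ⟨(x.2.1.1, x.2.2.1), by
        rw [x.2.1.2, x.2.2.2]; exact Finset.HasAntidiagonal.mem_antidiagonal.1 x.1.2⟩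
      left_inv := fun _ => rfl
      right_inv := by
        rintro ⟨⟨⟨p, q⟩, hp⟩, ⟨x, hx⟩, ⟨y, hy⟩⟩
        simp only at hx hy
        subst hx hy
        rfl }
  rw [Nat.card_congr e, Nat.card_sigma]
  rw [← Finset.sum_coe_sort (Finset.HasAntidiagonal.antidiagonal m)]
  push_cast [Nat.card_prod]
  rfl

namespace LTree

theorem labels_node (a : ℕ) (ts : List LTree) : (node a ts).labels = a :: ts.flatMap labels := by
  rw [labels, List.flatMap_def]
  congr 2
  exact List.attach_map_val (f := labels)

theorem altFrom_node (p : ℕ) (d : Bool) (a : ℕ) (ts : List LTree) :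
    altFrom p d (node a ts) ↔ (if d then a < p else p < a) ∧ ∀ t ∈ ts, altFrom a (!d) t := by
  rw [altFrom]
  refine and_congr Iff.rfl ⟨fun h t ht => h ⟨t, ht⟩ (List.mem_attach _ _), fun h x _ => h x.1 x.2⟩

/-- content of a forest -/
noncomputable def cont (l : List LTree) : ℕ →₀ ℕ :=
  Multiset.toFinsupp (l.flatMap labels : Multiset ℕ)

theorem cont_nil : cont [] = 0 := by simp [cont]

theorem cont_cons (a : ℕ) (c r : List LTree) :
    cont (node a c :: r) = Finsupp.single a 1 + (cont c + cont r) := by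
  simp only [cont, List.flatMap_cons, labels_node]
  rw [← Multiset.toFinsupp_singleton, ← map_add, ← map_add]
  rfl

/-- good forests -/
def Good (N : ℕ) (d : Bool) (p : ℕ) (l : List LTree) : Prop :=
  (∀ t ∈ l, altFrom p d t) ∧ ∀ a ∈ l.flatMap labels, a ∈ Finset.Icc 1 N

theorem good_nil (N : ℕ) (d : Bool) (p : ℕ) : Good N d p [] := by simp [Good]

theorem good_cons (N : ℕ) (d : Bool) (p a : ℕ) (c r : List LTree) :
    Good N d p (node a c :: r) ↔
      a ∈ (Finset.Icc 1 N).filter (fun a => if d then a < p else p < a) ∧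
        Good N (!d) a c ∧ Good N d p r := by
  simp only [Good, List.flatMap_cons, labels_node, altFrom_node,
    List.mem_append, Finset.mem_filter, List.mem_cons, or_imp, forall_and, forall_eq]
  tauto

/-- type of good forests -/
def Fo (N : ℕ) (d : Bool) (p : ℕ) : Type := {l : List LTree // Good N d p l}

noncomputable def wt {N : ℕ} {d : Bool} {p : ℕ} (l : Fo N d p) : ℕ →₀ ℕ := cont l.1

theorem finite_aux (N k : ℕ) : {l : List LTree | (l.flatMap labels).length ≤ k ∧
    ∀ a ∈ l.flatMap labels, a ∈ Finset.Icc 1 N}.Finite := by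
  induction k with
  | zero =>
    refine (Set.finite_singleton ([] : List LTree)).subset ?_
    rintro l ⟨h, _⟩
    rcases l with _ | ⟨⟨a, c⟩, r⟩
    · rfl
    · simp [labels_node] at h
  | succ k ih =>
    refine ((Set.finite_singleton ([] : List LTree)).union
      ((((Finset.Icc 1 N).finite_toSet).prod (ih.prod ih)).image
        (fun x => node x.1 x.2.1 :: x.2.2))).subset ?_
    rintro l ⟨h, h2⟩
    rcases l with _ | ⟨⟨a, c⟩, r⟩
    · left; rfl
    · right
      simp only [List.flatMap_cons, labels_node, List.length_append, List.length_cons] at h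
      simp only [List.flatMap_cons, labels_node, List.mem_append, List.mem_cons] at h2
      refine ⟨(a, c, r), ⟨h2 a (by simp), ⟨?_, ?_⟩, ⟨?_, ?_⟩⟩, rfl⟩
      · show (c.flatMap labels).length ≤ k; omega
      · intro b hb; exact h2 b (by tauto)
      · show (r.flatMap labels).length ≤ k; omega
      · intro b hb; exact h2 b (by tauto)

theorem finite_wt (N : ℕ) (d : Bool) (p : ℕ) (m : ℕ →₀ ℕ) :
    Finite {x : Fo N d p // wt x = m} := by
  have h := finite_aux N (Multiset.card (Finsupp.toMultiset m))
  have := h.to_subtype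
  refine Finite.of_injective (β := {l : List LTree | (l.flatMap labels).length ≤
    (Multiset.card (Finsupp.toMultiset m)) ∧ ∀ a ∈ l.flatMap labels, a ∈ Finset.Icc 1 N})
    (fun x => ⟨x.1.1, ?_, x.1.2.2⟩) ?_
  · obtain ⟨⟨l, hl⟩, hx⟩ := x
    have hx' : cont l = m := hx
    show (l.flatMap labels).length ≤ _
    rw [← hx', cont, Multiset.toFinsupp_toMultiset]
    simp
  · intro x y hxy
    simp only [Subtype.mk.injEq] at hxy
    exact Subtype.ext (Subtype.ext hxy)

/-- decomposition of forests -/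
def foEquiv (N : ℕ) (d : Bool) (p : ℕ) : Fo N d p ≃
    Unit ⊕ (Σ a : {a // a ∈ (Finset.Icc 1 N).filter (fun a => if d then a < p else p < a)},
      Unit × (Fo N (!d) a.1 × Fo N d p)) where
  toFun x := match x with
    | ⟨[], _⟩ => Sum.inl ()
    | ⟨node a c :: r, h⟩ => Sum.inr ⟨⟨a, ((good_cons N d p a c r).1 h).1⟩, (),
        ⟨c, ((good_cons N d p a c r).1 h).2.1⟩, ⟨r, ((good_cons N d p a c r).1 h).2.2⟩⟩
  invFun y := match y with
    | Sum.inl _ => ⟨[], good_nil N d p⟩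
    | Sum.inr ⟨a, _, c, r⟩ => ⟨node a.1 c.1 :: r.1, (good_cons N d p a.1 c.1 r.1).2 ⟨a.2, c.2, r.2⟩⟩
  left_inv := by
    rintro ⟨_ | ⟨⟨a, c⟩, r⟩, h⟩ <;> rfl
  right_inv := by
    rintro (_ | ⟨a, _, c, r⟩) <;> rfl

/-- generating function of good forests -/
noncomputable def G (N : ℕ) (d : Bool) (p : ℕ) : MvPowerSeries ℕ ℤ :=
  LTaux_gf (wt : Fo N d p → ℕ →₀ ℕ)

theorem finite_of_mul {α β : Type*} (w : α → ℕ →₀ ℕ) (w' : β → ℕ →₀ ℕ)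
    (h : ∀ m, Finite {x // w x = m}) (h' : ∀ m, Finite {x // w' x = m}) (m : ℕ →₀ ℕ) :
    Finite {x : α × β // w x.1 + w' x.2 = m} := by
  classical
  refine Finite.of_injective (β := Σ p : {p // p ∈ Finset.HasAntidiagonal.antidiagonal m},
    {x // w x = p.1.1} × {y // w' y = p.1.2})
    (fun x => ⟨⟨(w x.1.1, w' x.1.2), Finset.HasAntidiagonal.mem_antidiagonal.2 x.2⟩,
        ⟨x.1.1, rfl⟩, ⟨x.1.2, rfl⟩⟩) ?_
  apply Function.LeftInverse.injective (g := fun x => ⟨(x.2.1.1, x.2.2.1), by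
        rw [x.2.1.2, x.2.2.2]; exact Finset.HasAntidiagonal.mem_antidiagonal.1 x.1.2⟩)
  intro x; rfl

theorem finite_sigma {ι : Type*} [Fintype ι] {α : ι → Type*} (w : ∀ i, α i → ℕ →₀ ℕ)
    (h : ∀ i m, Finite {x // w i x = m}) (m : ℕ →₀ ℕ) :
    Finite {x : Σ i, α i // w x.1 x.2 = m} := by
  have := fun i => h i m
  refine Finite.of_injective (β := Σ i, {y // w i y = m}) (fun x => ⟨x.1.1, x.1.2, x.2⟩) ?_
  apply Function.LeftInverse.injective (g := fun x => ⟨⟨x.1, x.2.1⟩, x.2.2⟩)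
  intro x; rfl

theorem G_eq (N : ℕ) (d : Bool) (p : ℕ) :
    G N d p = 1 + ∑ a ∈ (Finset.Icc 1 N).filter (fun a => if d then a < p else p < a),
      MvPowerSeries.X a * (G N (!d) a * G N d p) := by
  have hu : ∀ k m : ℕ →₀ ℕ, Finite {x : Unit // (fun _ => k) x = m} := fun _ _ => inferInstance
  have h1 := LTaux_gf_equiv (wt : Fo N d p → ℕ →₀ ℕ)
    (Sum.elim (fun _ : Unit => (0 : ℕ →₀ ℕ))
      (fun x : (Σ a : {a // a ∈ (Finset.Icc 1 N).filter (fun a => if d then a < p else p < a)},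
        Unit × (Fo N (!d) a.1 × Fo N d p)) =>
          (fun a y => (fun _ : Unit => Finsupp.single a.1 1) y.1 + (wt y.2.1 + wt y.2.2) :
            ∀ a : {a // a ∈ (Finset.Icc 1 N).filter (fun a => if d then a < p else p < a)},
            Unit × (Fo N (!d) a.1 × Fo N d p) → ℕ →₀ ℕ) x.1 x.2)) (foEquiv N d p) (by
      rintro ⟨_ | ⟨⟨a, c⟩, r⟩, h⟩
      · exact cont_nil.symm
      · exact (cont_cons a c r).symm)
  have hfin : ∀ a : {a // a ∈ (Finset.Icc 1 N).filter (fun a => if d then a < p else p < a)},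
      ∀ m, Finite {y : Unit × (Fo N (!d) a.1 × Fo N d p) //
        (fun _ : Unit => (Finsupp.single a.1 1 : ℕ →₀ ℕ)) y.1 + (wt y.2.1 + wt y.2.2) = m} := by
    intro a m
    exact finite_of_mul (fun _ : Unit => (Finsupp.single a.1 1 : ℕ →₀ ℕ))
      (fun y : Fo N (!d) a.1 × Fo N d p => wt y.1 + wt y.2) (hu _)
      (finite_of_mul _ _ (finite_wt _ _ _) (finite_wt _ _ _)) m
  refine h1.trans ?_
  rw [LTaux_gf_sum _ _ (hu 0) (finite_sigma _ hfin), LTaux_gf_sigma _ hfin, LTaux_gf_unit]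
  congr 1
  rw [← Finset.sum_coe_sort ((Finset.Icc 1 N).filter (fun a => if d then a < p else p < a))]
  apply Finset.sum_congr rfl
  intro a _
  rw [LTaux_gf_prod (fun _ : Unit => (Finsupp.single a.1 1 : ℕ →₀ ℕ))
      (fun y : Fo N (!d) a.1 × Fo N d p => wt y.1 + wt y.2) (hu _)
      (finite_of_mul _ _ (finite_wt _ _ _) (finite_wt _ _ _)), LTaux_gf_unit,
      LTaux_gf_prod _ _ (finite_wt _ _ _) (finite_wt _ _ _)]
  rfl

theorem valid_iff (n a : ℕ) (c : List LTree) : Valid n (node a c) ↔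
    (∀ b ∈ a :: c.flatMap labels, b ∈ Finset.Icc 1 (n+1)) ∧
      Finsupp.single a 1 + cont c = LTaux_mon (Finset.Icc 1 (n+1)) := by
  have key : Finsupp.single a 1 + cont c = LTaux_mon (Finset.Icc 1 (n+1)) ↔
      ((a :: c.flatMap labels : List ℕ) : Multiset ℕ) = (Finset.Icc 1 (n+1)).val := by
    have e1 : Finsupp.single a 1 + cont c =
        Multiset.toFinsupp ((a :: c.flatMap labels : List ℕ) : Multiset ℕ) := by
      rw [cont, ← Multiset.toFinsupp_singleton, ← map_add]; rfl
    have e2 : LTaux_mon (Finset.Icc 1 (n+1)) = Multiset.toFinsupp (Finset.Icc 1 (n+1)).val := by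
      ext b
      rw [LTaux_mon_apply, Multiset.toFinsupp_apply,
        Multiset.count_eq_of_nodup (Finset.Icc 1 (n+1)).nodup]
      rfl
    rw [e1, e2]
    exact Multiset.toFinsupp.injective.eq_iff
  rw [key, Valid, labels_node]
  constructor
  · rintro ⟨h1, h2, h3⟩
    refine ⟨h3, ?_⟩
    let s : Finset ℕ := ⟨((a :: c.flatMap labels : List ℕ) : Multiset ℕ), Multiset.coe_nodup.2 h1⟩
    have : s = Finset.Icc 1 (n+1) := by
      apply Finset.eq_of_subset_of_card_le
      · intro b hb; exact h3 b hb
      · have : s.card = n + 1 := h2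
        rw [this]; simp
    exact congrArg Finset.val this
  · rintro ⟨h3, h⟩
    refine ⟨?_, ?_, h3⟩
    · rw [← Multiset.coe_nodup, h]; exact Finset.nodup _
    · rw [← Multiset.coe_card, h]; simp

/-- decomposition of trees -/
def treeEquiv (n : ℕ) : {t : LTree // t.Valid n ∧ t.AltI} ≃
    {x : (Σ a : {a // a ∈ Finset.Icc 1 (n+1)}, Unit × Fo (n+1) true a.1) //
      (Finsupp.single x.1.1 1 : ℕ →₀ ℕ) + wt x.2.2 = LTaux_mon (Finset.Icc 1 (n+1))} where
  toFun t := match t with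
    | ⟨node a c, h⟩ => ⟨⟨⟨a, ((valid_iff n a c).1 h.1).1 a (by simp)⟩, (), ⟨c, h.2, fun b hb =>
        ((valid_iff n a c).1 h.1).1 b (List.mem_cons_of_mem _ hb)⟩⟩, ((valid_iff n a c).1 h.1).2⟩
  invFun x := ⟨node x.1.1.1 x.1.2.2.1, (valid_iff n _ _).2 ⟨by
    intro b hb
    rcases List.mem_cons.1 hb with rfl | hb
    · exact x.1.1.2
    · exact x.1.2.2.2.2 b hb, x.2⟩, x.1.2.2.2.1⟩
  left_inv := by rintro ⟨⟨a, c⟩, h⟩; rfl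
  right_inv := by rintro ⟨⟨a, _, c⟩, h⟩; rfl

theorem card_tree (n : ℕ) : (Nat.card {t : LTree // t.Valid n ∧ t.AltI} : ℤ) =
    MvPowerSeries.coeff (LTaux_mon (Finset.Icc 1 (n+1)))
      (∑ a ∈ Finset.Icc 1 (n+1), MvPowerSeries.X a * G (n+1) true a) := by
  have hu : ∀ k m : ℕ →₀ ℕ, Finite {x : Unit // (fun _ => k) x = m} := fun _ _ => inferInstance
  rw [Nat.card_congr (treeEquiv n), ← LTaux_coeff_gf (fun x : (Σ a : {a // a ∈ Finset.Icc 1 (n+1)},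
    Unit × Fo (n+1) true a.1) => (Finsupp.single x.1.1 1 : ℕ →₀ ℕ) + wt x.2.2)]
  congr 1
  have := LTaux_gf_sigma (fun (a : {a // a ∈ Finset.Icc 1 (n+1)}) (y : Unit × Fo (n+1) true a.1) =>
    (fun _ : Unit => (Finsupp.single a.1 1 : ℕ →₀ ℕ)) y.1 + wt y.2)
    (fun a m => finite_of_mul _ _ (hu _) (finite_wt _ _ _) m)
  refine this.trans ?_
  rw [← Finset.sum_coe_sort (Finset.Icc 1 (n+1))]
  apply Finset.sum_congr rfl
  intro a _
  rw [LTaux_gf_prod (fun _ : Unit => (Finsupp.single a.1 1 : ℕ →₀ ℕ)) _ (hu _) (finite_wt _ _ _),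
    LTaux_gf_unit]
  rfl

end LTree

theorem LTaux_map1 (s : Finset ℕ) (f : ℕ → MvPowerSeries ℕ ℤ) (t : Finset ℕ)
    (h : t = s.map (addRightEmbedding 1)) : ∑ a ∈ t, f a = ∑ b ∈ s, f (b+1) := by
  subst h; simp

theorem stmt_11 (n : ℕ) :
    Nat.card {t : LTree // t.Valid n ∧ t.AltI} = n ^ n := by
  have hIcc : Finset.Icc 1 (n+1) = (Finset.range (n+1)).map (addRightEmbedding 1) := by
    ext a
    simp only [Finset.mem_Icc, Finset.mem_map, Finset.mem_range, addRightEmbedding_apply]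
    exact ⟨fun h => ⟨a - 1, by omega, by omega⟩, by rintro ⟨b, hb, rfl⟩; omega⟩
  obtain ⟨hc, hE⟩ := LTaux_alg (n+1) (fun b => (MvPowerSeries.X (b+1) : MvPowerSeries ℕ ℤ))
    (fun b => LTree.G (n+1) true (b+1)) (fun b => LTree.G (n+1) false (b+1))
    (by
      intro k hk
      have h := LTree.G_eq (n+1) true (k+1)
      rw [LTaux_map1 (Finset.range k)] at h
      · simp only [← mul_assoc, ← Finset.sum_mul, Bool.not_true] at h
        linear_combination h
      · ext a
        simp only [Finset.mem_filter, Finset.mem_Icc, Finset.mem_map, Finset.mem_range,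
          addRightEmbedding_apply, if_true]
        exact ⟨fun h => ⟨a - 1, by omega, by omega⟩, by rintro ⟨b, hb, rfl⟩; omega⟩)
    (by
      intro k hk
      have h := LTree.G_eq (n+1) false (k+1)
      rw [LTaux_map1 (Finset.Ico (k+1) (n+1))] at h
      · simp only [← mul_assoc, ← Finset.sum_mul, Bool.not_false] at h
        linear_combination h
      · ext a
        simp only [Finset.mem_filter, Finset.mem_Icc, Finset.mem_map, Finset.mem_Ico,
          addRightEmbedding_apply, Bool.false_eq_true, if_false]
        exact ⟨fun h => ⟨a - 1, by omega, by omega⟩, by rintro ⟨b, hb, rfl⟩; omega⟩)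
  have hE' : ∏ a ∈ Finset.Icc 1 (n+1), (1 + MvPowerSeries.X a * LTree.G (n+1) true (n+1+1)) =
      LTree.G (n+1) true (n+1+1) := by
    rw [hIcc, Finset.prod_map]
    exact hE
  have key := LTaux_coeff_E _ (Finset.Icc 1 (n+1)) hE' _ hc
  have hcard := LTree.card_tree n
  rw [LTaux_map1 _ _ _ hIcc] at hcard
  classical
  rw [map_sub, ← hcard, MvPowerSeries.coeff_one, if_neg] at key
  · simp [LTaux_e] at key
    exact_mod_cast key
  · intro h
    have := DFunLike.congr_fun h 1
    rw [LTaux_mon_apply] at this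
    simp at this
end

section
/- The number of all alternating ordered rooted labeled trees on n+1 vertices (of both types) equals 2·n^n, and the two types have equal cardinalities. -/
open Polynomial in
theorem xx_fd (x : ℚ) (n : ℕ) : ∑ k ∈ Finset.range (n+2), (-1:ℚ)^(n+1-k) * ((n+1).choose k : ℚ) * (x+k)^n = 0 := by
  have h := fwdDiff_iter_eq_sum_shift (1:ℚ) (fun r : ℚ => r^n) (n+1) x
  rw [fwdDiff_iter_pow_eq_zero_of_lt (by omega)] at h
  simp at h
  rw [h]

theorem choose_aux (k j : ℕ) : ((k+j+1).choose k : ℚ) * (j+1) = (k+j+1) * (k+j).choose k := by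
  have := Nat.add_one_mul_choose_eq (k+j) j
  have h3 := Nat.choose_symm_add (a := k) (b := j)
  have h4 : (k+j+1).choose k = (k+j+1).choose (j+1) := Nat.choose_symm_of_eq_add (by omega)
  rw [h4, h3]
  have := congrArg (Nat.cast (R := ℚ)) this
  push_cast at this
  linarith

noncomputable def abA (x : ℚ) (k : ℕ) : ℚ := if k = 0 then 1 else x * (x+k)^(k-1)

open Polynomial in
theorem abel_poly (x : ℚ) (n : ℕ) :
    ∑ k ∈ Finset.range (n+1), C ((n.choose k : ℚ) * abA x k) * (X + C (((n-k : ℕ) : ℚ)))^(n-k)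
      = (X + C (x + n))^n := by
  induction n with
  | zero => simp [abA]
  | succ n ih =>
    rw [← sub_eq_zero]
    set P := ∑ k ∈ Finset.range (n+1+1), C (((n+1).choose k : ℚ) * abA x k) * (X + C (((n+1-k : ℕ) : ℚ)))^(n+1-k) - (X + C (x + (n+1:ℕ)))^(n+1) with hP
    have hd : derivative P = 0 := by
      rw [hP]
      have h2 := congrArg (fun p => C ((n:ℚ)+1) * p.comp (X + C 1)) ih
      simp only [Polynomial.sum_comp, mul_comp, pow_comp, add_comp, X_comp, C_comp] at h2
      rw [derivative_sub, derivative_sum, Finset.sum_range_succ]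
      simp only [derivative_mul, derivative_C, derivative_X_add_C_pow, zero_mul, zero_add]
      simp only [Nat.sub_self, Nat.cast_zero, C_0, zero_mul, mul_zero, add_zero, Nat.add_sub_cancel]
      rw [sub_eq_zero]
      convert h2 using 1
      · rw [Finset.mul_sum]
        refine Finset.sum_congr rfl fun k hk => ?_
        have hk : k ≤ n := by simpa [Nat.lt_succ_iff] using hk
        obtain ⟨j, rfl⟩ := Nat.exists_eq_add_of_le hk
        have e1 : k + j + 1 - k = j + 1 := by omega
        have e2 : k + j - k = j := by omega
        rw [e1, e2]
        have hc := choose_aux k j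
        have hp : (X + C ((j+1:ℕ):ℚ)) = X + C 1 + C (j:ℚ) := by push_cast; simp; ring
        rw [hp, Nat.add_sub_cancel]
        have : C (((k+j+1).choose k : ℚ) * abA x k) * C ((j+1:ℕ):ℚ) = C (((k+j:ℕ):ℚ)+1) * C (((k+j).choose k : ℚ) * abA x k) := by
          rw [← C_mul, ← C_mul]; congr 1; push_cast; linear_combination abA x k * hc
        linear_combination (X + C 1 + C (j:ℚ))^j * this
      · congr 1
        · push_cast; ring
        · congr 1; push_cast; simp; ring
    have hdeg := derivative_eq_zero.1 hd
    rw [eq_C_of_natDegree_eq_zero hdeg]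
    have he : P.eval (-(x + (n+1:ℕ))) = 0 := by
      rw [hP]
      simp only [eval_sub, eval_finsetSum, eval_mul, eval_C, eval_pow, eval_add, eval_X]
      rw [neg_add_cancel, zero_pow (by omega), sub_zero]
      rw [← mul_zero x, ← xx_fd x n, Finset.mul_sum]
      refine Finset.sum_congr rfl fun k hk => ?_
      have hk : k ≤ n+1 := by simpa [Nat.lt_succ_iff] using hk
      rw [Nat.cast_sub hk]
      have : (-(x + ((n+1:ℕ):ℚ)) + (((n+1:ℕ):ℚ) - k)) = -1 * (x+k) := by ring
      rw [this, mul_pow]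
      unfold abA
      split_ifs with h0
      · subst h0; simp; ring
      · have h5 : (x+(k:ℚ))^n = (x+k)^(k-1) * (x+k)^(n+1-k) := by rw [← pow_add]; congr 1; omega
        rw [h5]; ring
    rw [eq_C_of_natDegree_eq_zero hdeg] at he
    simpa using he

theorem abel1 (x y : ℚ) (n : ℕ) :
    ∑ k ∈ Finset.range (n+1), (n.choose k : ℚ) * abA x k * (y + (n-k : ℕ))^(n-k) = (x + y + n)^n := by
  have := congrArg (Polynomial.eval y) (abel_poly x n)
  simp only [Polynomial.eval_finsetSum, Polynomial.eval_mul, Polynomial.eval_C, Polynomial.eval_pow, Polynomial.eval_add, Polynomial.eval_X] at this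
  rw [this]; ring

theorem abel2 (x y : ℚ) (n : ℕ) :
    ∑ k ∈ Finset.range (n+2), ((n+1).choose k : ℚ) * abA x k * abA y (n+1-k) = (x + y) * (x+y+n+1)^n := by
  have h1 := abel1 x y (n+1)
  have h2 := abel1 x (y+1) n
  have h3 : ∑ k ∈ Finset.range (n+2), ((n+1).choose k : ℚ) * abA x k * abA y (n+1-k)
     = ∑ k ∈ Finset.range (n+2), (((n+1).choose k : ℚ) * abA x k * (y + (n+1-k : ℕ))^(n+1-k)
       - ((n+1).choose k : ℚ) * abA x k * (n+1-k : ℕ) * (y + (n+1-k : ℕ))^(n+1-k-1)) := by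
    refine Finset.sum_congr rfl fun k hk => ?_
    generalize n+1-k = j
    rcases j with _ | j
    · simp [abA]
    · have : abA y (j+1) = y * (y + (j+1:ℕ))^j := by simp [abA]
      rw [this, pow_succ, Nat.add_sub_cancel]; ring
  rw [h3, Finset.sum_sub_distrib, h1, Finset.sum_range_succ _ (n+1)]
  have h4 : ∑ k ∈ Finset.range (n+1), ((n+1).choose k : ℚ) * abA x k * (n+1-k : ℕ) * (y + (n+1-k : ℕ))^(n+1-k-1) = (n+1) * (x + (y+1) + n)^n := by
    rw [← h2, Finset.mul_sum]
    refine Finset.sum_congr rfl fun k hk => ?_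
    have hk : k ≤ n := by simpa [Nat.lt_succ_iff] using hk
    obtain ⟨j, rfl⟩ := Nat.exists_eq_add_of_le hk
    have e1 : k + j + 1 - k = j + 1 := by omega
    have e2 : k + j - k = j := by omega
    rw [e1, e2]
    have hc := choose_aux k j
    rw [Nat.add_sub_cancel]
    have hp : y + ((j+1:ℕ):ℚ) = y + 1 + j := by push_cast; ring
    rw [hp]
    push_cast
    linear_combination abA x k * (y+1+j)^j * hc
  rw [h4]
  simp [pow_succ]; ring

/-- first numeric identity -/
theorem num1 (n : ℕ) : ∑ k ∈ Finset.range (n+1), n.choose k * ((k+1)^(k-1) * ((n-k+1)^(n-k-1) * (n-k+1))) = (n+2)^n := by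
  have h := abel1 1 1 n
  have : ((∑ k ∈ Finset.range (n+1), n.choose k * ((k+1)^(k-1) * ((n-k+1)^(n-k-1) * (n-k+1))) : ℕ) : ℚ) = ((n+2)^n : ℕ) := by
    push_cast
    rw [show (n:ℚ)+2 = 1+1+n by ring, ← h]
    refine Finset.sum_congr rfl fun k hk => ?_
    generalize n-k = j
    rw [mul_assoc]
    congr 2
    · unfold abA; split_ifs with h
      · simp [h]
      · rw [add_comm]; simp
    · rcases j with _ | j
      · simp
      · simp [pow_succ]; ring
  exact_mod_cast this

/-- second numeric identity -/
theorem num2 (n : ℕ) (a : ℕ → ℕ) (h0 : a 0 = 0)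
    (h1 : ∑ k ∈ Finset.range (n+2), (n+1).choose k * (a k * (n+1-k+1)^(n+1-k-1)) = (n+2)^n)
    (ih : ∀ k < n, a (k+1) = k^k) :
    a (n+1) = n^n := by
  have h2 := abel2 (-1) 1 n
  have h3 : ∀ j : ℕ, abA 1 j = ((j+1)^(j-1) : ℕ) := by
    intro j; unfold abA; split_ifs with h
    · simp [h]
    · rw [add_comm]; simp
  have h4 : ∀ j : ℕ, abA (-1) (j+1) = - (j^j : ℕ) := by
    intro j; simp [abA]
  have h1' := congrArg (Nat.cast (R := ℚ)) h1
  rw [Finset.sum_range_succ', Finset.sum_range_succ] at h2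
  rw [Finset.sum_range_succ', Finset.sum_range_succ] at h1'
  push_cast at h1'
  simp only [h3, h4] at h2
  have h5 : ∑ k ∈ Finset.range n, ((n+1).choose (k+1) : ℚ) * -((k^k : ℕ):ℚ) * ((n+1-(k+1)+1)^(n+1-(k+1)-1) : ℕ)
     = - ∑ k ∈ Finset.range n, ((n+1).choose (k+1) : ℚ) * ((a (k+1):ℚ) * (((n+1-(k+1) : ℕ):ℚ)+1)^(n+1-(k+1)-1)) := by
    rw [← Finset.sum_neg_distrib]
    refine Finset.sum_congr rfl fun k hk => ?_
    rw [ih k (by simpa using hk)]; push_cast; ring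
  rw [h5] at h2
  simp [h0, abA] at h1' h2
  have : (a (n+1) : ℚ) = (n^n : ℕ) := by push_cast; rw [show (n:ℚ)+1+1 = n+2 by ring] at h2; linarith
  exact_mod_cast this

/-- forests as binary trees: label, children, later siblings -/
inductive BF : Type
  | nil : BF
  | cons : ℕ → BF → BF → BF

namespace BF

def lab : BF → Multiset ℕ
  | nil => 0
  | cons a c s => a ::ₘ (lab c + lab s)

def roots : BF → Set ℕ
  | nil => ∅
  | cons a _ s => insert a (roots s)

def dlt (d : Bool) (r a : ℕ) : Prop := if d then r < a else a < r

def alt : Bool → BF → Prop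
  | _, nil => True
  | d, cons a c s => (∀ r ∈ roots c, dlt d r a) ∧ alt (!d) c ∧ alt d s

/-- admissible insertion positions -/
def pos : Bool → BF → Finset (List Bool)
  | true, nil => {[]}
  | false, nil => ∅
  | true, cons _ c s => insert [] ((pos false c).image (List.cons false) ∪ (pos true s).image (List.cons true))
  | false, cons _ c s => ((pos true c).image (List.cons false) ∪ (pos false s).image (List.cons true))

def ins (m : ℕ) (C : BF) : List Bool → BF → BF
  | [], g => cons m C g
  | false :: w, cons b c s => cons b (ins m C w c) s
  | true :: w, cons b c s => cons b c (ins m C w s)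
  | _ :: _, nil => nil

theorem nil_mem_pos {p : Bool} {g : BF} : [] ∈ pos p g ↔ p = true := by
  cases p <;> cases g <;> simp [pos]

theorem not_mem_pos_nil {p b : Bool} {w : List Bool} : ¬ (b :: w) ∈ pos p nil := by
  cases p <;> simp [pos]

theorem false_mem_pos {p : Bool} {w : List Bool} {b : ℕ} {c s : BF} :
    (false :: w) ∈ pos p (cons b c s) ↔ w ∈ pos (!p) c := by
  cases p <;> simp [pos]

theorem true_mem_pos {p : Bool} {w : List Bool} {b : ℕ} {c s : BF} :
    (true :: w) ∈ pos p (cons b c s) ↔ w ∈ pos p s := by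
  cases p <;> simp [pos]

theorem card_pos (p : Bool) (g : BF) : (pos p g).card = Multiset.card (lab g) + (if p then 1 else 0) := by
  have hd : ∀ A B : Finset (List Bool), Disjoint (A.image (List.cons false)) (B.image (List.cons true)) := by
    intro A B
    rw [Finset.disjoint_left]
    intro x hx hy
    simp only [Finset.mem_image] at hx hy
    obtain ⟨u, _, rfl⟩ := hx
    obtain ⟨v, _, h⟩ := hy
    simp at h
  induction g generalizing p with
  | nil => cases p <;> simp [pos, lab]
  | cons a c s ihc ihs =>
    cases p
    · simp only [pos, lab]
      rw [Finset.card_union_of_disjoint (hd _ _), Finset.card_image_of_injective _ (List.cons_injective),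
        Finset.card_image_of_injective _ (List.cons_injective), ihc, ihs]
      simp; omega
    · simp only [pos, lab]
      rw [Finset.card_insert_of_notMem (by simp), Finset.card_union_of_disjoint (hd _ _), Finset.card_image_of_injective _ (List.cons_injective),
        Finset.card_image_of_injective _ (List.cons_injective), ihc, ihs]
      simp; omega

theorem lab_ins {m : ℕ} {C : BF} {w : List Bool} {g : BF} {p : Bool} (h : w ∈ pos p g) :
    lab (ins m C w g) = m ::ₘ (lab C + lab g) := by
  induction w generalizing g p with
  | nil => simp [ins, lab]
  | cons b w ih =>
    cases g with
    | nil => exact absurd h not_mem_pos_nil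
    | cons a c s =>
      cases b
      · rw [false_mem_pos] at h
        simp only [ins, lab, ih h, ← Multiset.singleton_add]; abel
      · rw [true_mem_pos] at h
        simp only [ins, lab, ih h, ← Multiset.singleton_add]; abel

theorem roots_sub_lab {g : BF} {r : ℕ} (h : r ∈ roots g) : r ∈ lab g := by
  induction g with
  | nil => simp [roots] at h
  | cons a c s ihc ihs =>
    simp only [roots, Set.mem_insert_iff] at h
    simp only [lab, Multiset.mem_cons, Multiset.mem_add]
    tauto

theorem roots_ins {m : ℕ} {C : BF} {w : List Bool} {g : BF} {p : Bool} (h : w ∈ pos p g) :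
    roots g ⊆ roots (ins m C w g) ∧ ∀ r ∈ roots (ins m C w g), r ∈ roots g ∨ (p = true ∧ r = m) := by
  induction w generalizing g p with
  | nil => rw [nil_mem_pos] at h; simp [ins, roots, h]; tauto
  | cons b w ih =>
    cases g with
    | nil => exact absurd h not_mem_pos_nil
    | cons a c s =>
      cases b
      · simp [ins, roots]; tauto
      · rw [true_mem_pos] at h
        have := ih h
        simp only [ins, roots]
        refine ⟨Set.insert_subset_insert this.1, ?_⟩
        rintro r (rfl | hr)
        · simp
        · rcases this.2 r hr with h | h
          · left; right; exact h
          · right; exact h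

theorem dlt_not {d : Bool} {a b : ℕ} : dlt (!d) a b ↔ dlt d b a := by
  cases d <;> simp [dlt]

/-- inserting the `d`-extremal element at a level of type `d` -/
theorem alt_ins {m : ℕ} {C : BF} {w : List Bool} {g : BF} {d e p : Bool} (hp : p = (e == d)) (h : w ∈ pos p g)
    (hg : ∀ x ∈ lab g, dlt d x m) (hC : ∀ x ∈ lab C, dlt d x m) :
    alt e (ins m C w g) ↔ alt (!d) C ∧ alt e g := by
  induction w generalizing g p e with
  | nil =>
    rw [nil_mem_pos] at h
    subst h
    have : e = d := by simpa using hp.symm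
    subst this
    simp only [ins, alt]
    constructor
    · tauto
    · rintro ⟨h1, h2⟩
      exact ⟨fun r hr => hC r (roots_sub_lab hr), h1, h2⟩
  | cons b w ih =>
    cases g with
    | nil => exact absurd h not_mem_pos_nil
    | cons a c s =>
      simp only [lab, Multiset.mem_cons, Multiset.mem_add] at hg
      cases b
      · rw [false_mem_pos] at h
        have hr := roots_ins (m := m) (C := C) h
        simp only [ins, alt]
        rw [ih (p := !p) (by subst hp; cases e <;> cases d <;> rfl) h (fun x hx => hg x (by tauto))]
        have : (∀ r ∈ (ins m C w c).roots, dlt e r a) ↔ (∀ r ∈ c.roots, dlt e r a) := by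
          constructor
          · intro H r h1; exact H r (hr.1 h1)
          · intro H r h1
            rcases hr.2 r h1 with h2 | ⟨h2, rfl⟩
            · exact H r h2
            · have he : e = !d := by
                subst hp; cases e <;> cases d <;> simp_all
              subst he
              rw [dlt_not]
              exact hg a (by simp)
        rw [this]; tauto
      · rw [true_mem_pos] at h
        simp only [ins, alt]
        rw [ih hp h (fun x hx => hg x (by tauto))]
        tauto

theorem ins_inj {m : ℕ} {C C' : BF} {w w' : List Bool} {g g' : BF} {p p' : Bool} (h : w ∈ pos p g) (h' : w' ∈ pos p' g')
    (hg : m ∉ lab g) (hg' : m ∉ lab g') (hC : m ∉ lab C) (hC' : m ∉ lab C') (heq : ins m C w g = ins m C' w' g') :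
    w = w' ∧ g = g' ∧ C = C' := by
  induction w generalizing w' g g' p p' with
  | nil =>
    cases w' with
    | nil => simp [ins] at heq; tauto
    | cons b' w' =>
      exfalso
      cases g' with
      | nil => exact absurd h' not_mem_pos_nil
      | cons a' c' s' =>
        simp only [lab, Multiset.mem_cons, Multiset.mem_add] at hg'
        cases b' <;> simp [ins] at heq <;> tauto
  | cons b w ih =>
    cases g with
    | nil => exact absurd h not_mem_pos_nil
    | cons a c s =>
      simp only [lab, Multiset.mem_cons, Multiset.mem_add] at hg
      cases w' with
      | nil =>
        exfalso
        cases b <;> simp [ins] at heq <;> (have := heq.1; simp_all)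
      | cons b' w' =>
        cases g' with
        | nil => exact absurd h' not_mem_pos_nil
        | cons a' c' s' =>
          simp only [lab, Multiset.mem_cons, Multiset.mem_add] at hg'
          push Not at hg hg'
          cases b <;> cases b'
          · rw [false_mem_pos] at h h'
            simp only [ins, BF.cons.injEq] at heq
            have := ih h h' hg.2.1 hg'.2.1 heq.2.1
            simp [this, heq]
          · exfalso
            rw [false_mem_pos] at h
            simp only [ins, BF.cons.injEq] at heq
            apply hg'.2.1
            rw [← heq.2.1, lab_ins h]; simp
          · exfalso
            rw [false_mem_pos] at h'
            simp only [ins, BF.cons.injEq] at heq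
            apply hg.2.1
            rw [heq.2.1, lab_ins h']; simp
          · rw [true_mem_pos] at h h'
            simp only [ins, BF.cons.injEq] at heq
            have := ih h h' hg.2.2 hg'.2.2 heq.2.2
            simp [this, heq]

/-- every forest containing the extremal element arises by insertion -/
theorem exists_ins {m : ℕ} {d e : Bool} {f : BF} (hm : m ∈ lab f) (hnd : (lab f).Nodup)
    (hx : ∀ x ∈ lab f, x ≠ m → dlt d x m) (ha : alt e f) (hroot : e = d ∨ m ∉ roots f) :
    ∃ C g w, w ∈ pos (e == d) g ∧ f = ins m C w g := by
  induction f generalizing e with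
  | nil => simp [lab] at hm
  | cons a c s ihc ihs =>
    simp only [lab, Multiset.mem_cons, Multiset.mem_add] at hm hx
    simp only [lab, Multiset.nodup_cons, Multiset.nodup_add, Multiset.mem_add] at hnd
    simp only [alt] at ha
    simp only [roots, Set.mem_insert_iff] at hroot
    by_cases hma : m = a
    · subst hma
      have : e = d := by tauto
      subst this
      exact ⟨c, s, [], by simp [nil_mem_pos], rfl⟩
    · by_cases hmc : m ∈ lab c
      · obtain ⟨C, g, w, h1, h2⟩ := ihc hmc hnd.2.1 (fun x hx' => hx x (by tauto)) ha.2.1 (by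
          by_cases hed : e = d
          · right
            intro hr
            subst hed
            have h1 := ha.1 m hr
            have h2 := hx a (by simp) (Ne.symm hma)
            revert h1 h2
            cases e <;> simp [dlt] <;> omega
          · left; cases e <;> cases d <;> simp_all)
        refine ⟨C, cons a g s, false :: w, ?_, ?_⟩
        · rw [false_mem_pos]; convert h1 using 2; cases e <;> cases d <;> rfl
        · simp [ins, h2]
      · obtain ⟨C, g, w, h1, h2⟩ := ihs (by tauto) hnd.2.2.1 (fun x hx' => hx x (by tauto)) ha.2.2 (by tauto)
        refine ⟨C, cons a c g, true :: w, ?_, ?_⟩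
        · rw [true_mem_pos]; exact h1
        · simp [ins, h2]

/-- forests on label set `S` whose roots have type `d` -/
def For (d : Bool) (S : Finset ℕ) : Type := {f : BF // lab f = S.val ∧ alt d f}

/-- a single tree with label set `S` (root label, children) -/
def Tr (d : Bool) (S : Finset ℕ) : Type :=
  {t : ℕ × BF // t.1 ::ₘ lab t.2 = S.val ∧ (∀ r ∈ roots t.2, dlt d r t.1) ∧ alt (!d) t.2}

theorem split_val {S : Finset ℕ} {A B : Multiset ℕ} (h : A + B = S.val) :
    ∃ T ∈ S.powerset, A = T.val ∧ B = (S \ T).val := by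
  have hn : (A + B).Nodup := h ▸ S.nodup
  have hA := (Multiset.nodup_add.1 hn).1
  refine ⟨⟨A, hA⟩, ?_, rfl, ?_⟩
  · rw [Finset.mem_powerset, ← Finset.val_le_iff, ← h]
    exact Multiset.le_add_right _ _
  · rw [Finset.sdiff_val, ← h]; simp

theorem join_val {S T : Finset ℕ} (h : T ∈ S.powerset) : T.val + (S \ T).val = S.val := by
  rw [Finset.sdiff_val]
  exact add_tsub_cancel_of_le (Finset.val_le_iff.2 (Finset.mem_powerset.1 h))

theorem exists_ext (d : Bool) (S : Finset ℕ) (h : S.Nonempty) : ∃ m ∈ S, ∀ x ∈ S, x ≠ m → dlt d x m := by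
  cases d
  · refine ⟨S.min' h, S.min'_mem h, fun x hx hne => ?_⟩
    have := S.min'_le x hx
    simp [dlt]; omega
  · refine ⟨S.max' h, S.max'_mem h, fun x hx hne => ?_⟩
    have := S.le_max' x hx
    simp [dlt]; omega

theorem dlt_irrefl {d : Bool} {m : ℕ} : ¬ dlt d m m := by cases d <;> simp [dlt]

def DecT (d : Bool) (S' : Finset ℕ) : Type :=
  Σ T : {T // T ∈ S'.powerset}, For (!d) T.1 × (Σ g : For d (S' \ T.1), {w // w ∈ pos true g.1})

theorem decomp (d : Bool) (S : Finset ℕ) (m : ℕ) (hm : m ∈ S) (hx : ∀ x ∈ S, x ≠ m → dlt d x m) :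
    Nonempty (DecT d (S.erase m) ≃ For d S) := by
  have hS : m ::ₘ (S.erase m).val = S.val := by
    rw [Finset.erase_val]; exact Multiset.cons_erase hm
  have hx' : ∀ x ∈ (S.erase m).val, dlt d x m := by
    intro x hx1
    have := Finset.mem_erase.1 hx1
    exact hx x this.2 this.1
  have hsub1 : ∀ T ∈ (S.erase m).powerset, ∀ x ∈ T.val, dlt d x m := by
    intro T hT x h; apply hx'; rw [← join_val hT]; exact Multiset.mem_add.2 (Or.inl h)
  have hsub2 : ∀ T ∈ (S.erase m).powerset, ∀ x ∈ (S.erase m \ T).val, dlt d x m := by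
    intro T hT x h; apply hx'; rw [← join_val hT]; exact Multiset.mem_add.2 (Or.inr h)
  refine ⟨Equiv.ofBijective (fun X => ⟨ins m X.2.1.1 X.2.2.2.1 X.2.2.1.1, ?_, ?_⟩) ⟨?_, ?_⟩⟩
  · rw [lab_ins X.2.2.2.2, X.2.1.2.1, X.2.2.1.2.1, join_val X.1.2, hS]
  · rw [alt_ins (p := true) (d := d) (by simp) X.2.2.2.2]
    · exact ⟨X.2.1.2.2, X.2.2.1.2.2⟩
    · rw [X.2.2.1.2.1]; exact hsub2 _ X.1.2
    · rw [X.2.1.2.1]; exact hsub1 _ X.1.2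
  · rintro ⟨⟨T, hT⟩, ⟨C, hC1, hC2⟩, ⟨g, hg1, hg2⟩, ⟨w, hw⟩⟩ ⟨⟨T', hT'⟩, ⟨C', hC1', hC2'⟩, ⟨g', hg1', hg2'⟩, ⟨w', hw'⟩⟩ h
    have h := congrArg Subtype.val h
    dsimp only at h hC1 hg1 hC1' hg1' hw hw'
    obtain ⟨rfl, rfl, rfl⟩ := ins_inj hw hw'
      (by rw [hg1]; exact fun h => dlt_irrefl (hsub2 T hT m h))
      (by rw [hg1']; exact fun h => dlt_irrefl (hsub2 T' hT' m h))
      (by rw [hC1]; exact fun h => dlt_irrefl (hsub1 T hT m h))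
      (by rw [hC1']; exact fun h => dlt_irrefl (hsub1 T' hT' m h)) h
    have : T = T' := Finset.val_injective (hC1.symm.trans hC1')
    subst this
    rfl
  · rintro ⟨f, hf1, hf2⟩
    obtain ⟨C, g, w, hw, rfl⟩ := exists_ins (m := m) (d := d) (f := f) (by rw [hf1]; exact hm) (by rw [hf1]; exact S.nodup)
      (by rw [hf1]; exact hx) hf2 (Or.inl rfl)
    simp only [beq_self_eq_true] at hw
    have hl := lab_ins (m := m) (C := C) hw
    rw [hf1, ← hS] at hl
    have hl := (Multiset.cons_inj_right _).1 hl
    obtain ⟨T, hT, h1, h2⟩ := split_val hl.symm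
    rw [alt_ins (p := true) (d := d) (by simp) hw (by rw [h2]; exact hsub2 T hT) (by rw [h1]; exact hsub1 T hT)] at hf2
    exact ⟨⟨⟨T, hT⟩, ⟨C, h1, hf2.1⟩, ⟨g, h2, hf2.2⟩, ⟨w, hw⟩⟩, rfl⟩

theorem lab_eq_zero {f : BF} (h : lab f = 0) : f = nil := by
  cases f with
  | nil => rfl
  | cons a c s => simp [lab] at h

theorem card_For (n : ℕ) : ∀ (d : Bool) (S : Finset ℕ), S.card = n → Finite (For d S) ∧ Nat.card (For d S) = (n+1)^(n-1) := by
  induction n using Nat.strong_induction_on with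
  | _ n ih =>
    intro d S hS
    rcases n with _ | n
    · rw [Finset.card_eq_zero] at hS
      subst hS
      have : Unique (For d ∅) := ⟨⟨⟨nil, by simp [lab], by simp [alt]⟩⟩, fun f => Subtype.ext (lab_eq_zero f.2.1)⟩
      exact ⟨inferInstance, by simp⟩
    · obtain ⟨m, hm, hx⟩ := exists_ext d S (Finset.card_pos.1 (by omega))
      obtain ⟨e⟩ := decomp d S m hm hx
      have hc : (S.erase m).card = n := by rw [Finset.card_erase_of_mem hm]; omega
      have hT : ∀ T : {T // T ∈ (S.erase m).powerset}, T.1.card < n + 1 ∧ (S.erase m \ T.1).card = n - T.1.card := by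
        intro T
        have h1 := Finset.mem_powerset.1 T.2
        have h2 := Finset.card_le_card h1
        rw [Finset.card_sdiff_of_subset h1]; omega
      have f1 : ∀ T : {T // T ∈ (S.erase m).powerset}, Finite (For (!d) T.1) := fun T => (ih _ (hT T).1 _ _ rfl).1
      have f2 : ∀ T : {T // T ∈ (S.erase m).powerset}, Finite (For d (S.erase m \ T.1)) := fun T => (ih (n - T.1.card) (by omega) _ _ (hT T).2).1
      have f3 : Finite (DecT d (S.erase m)) := by unfold DecT; infer_instance
      refine ⟨Finite.of_equiv _ e, ?_⟩
      rw [← Nat.card_congr e]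
      unfold DecT
      rw [Nat.card_sigma]
      have : ∀ T : {T // T ∈ (S.erase m).powerset}, Nat.card (For (!d) T.1 × (Σ g : For d (S.erase m \ T.1), {w // w ∈ pos true g.1}))
         = (fun k => (k+1)^(k-1) * ((n-k+1)^(n-k-1) * (n-k+1))) T.1.card := by
        intro T
        have := Fintype.ofFinite (For d (S.erase m \ T.1))
        rw [Nat.card_prod, (ih _ (hT T).1 _ _ rfl).2, Nat.card_sigma]
        have h2 : ∀ g : For d (S.erase m \ T.1), Nat.card {w // w ∈ pos true g.1} = n - T.1.card + 1 := by
          intro g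
          rw [Nat.card_eq_fintype_card, Fintype.card_coe, card_pos, g.2.1]
          simp only [Finset.card_val, (hT T).2]; simp
        simp only [h2, Finset.sum_const, Finset.card_univ, smul_eq_mul]
        rw [← Nat.card_eq_fintype_card, (ih (n - T.1.card) (by omega) _ _ (hT T).2).2]
      simp only [this]
      rw [Finset.sum_coe_sort (S.erase m).powerset (fun T => (fun k => (k+1)^(k-1) * ((n-k+1)^(n-k-1) * (n-k+1))) T.card), Finset.sum_powerset_apply_card (fun k => (k+1)^(k-1) * ((n-k+1)^(n-k-1) * (n-k+1))), hc]
      simpa using num1 n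

theorem decomp2 (d : Bool) (S : Finset ℕ) (hS : S.Nonempty) :
    Nonempty ((Σ T : {T // T ∈ S.powerset}, Tr d T.1 × For d (S \ T.1)) ≃ For d S) := by
  refine ⟨Equiv.ofBijective (fun X => ⟨cons X.2.1.1.1 X.2.1.1.2 X.2.2.1, ?_, ?_⟩) ⟨?_, ?_⟩⟩
  · simp only [lab]
    rw [← Multiset.cons_add, X.2.1.2.1, X.2.2.2.1, join_val X.1.2]
  · exact ⟨X.2.1.2.2.1, X.2.1.2.2.2, X.2.2.2.2⟩
  · rintro ⟨⟨T, hT⟩, ⟨⟨a, c⟩, hC1, hC2⟩, ⟨g, hg1, hg2⟩⟩ ⟨⟨T', hT'⟩, ⟨⟨a', c'⟩, hC1', hC2'⟩, ⟨g', hg1', hg2'⟩⟩ h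
    have h := congrArg Subtype.val h
    simp only [cons.injEq] at h
    obtain ⟨rfl, rfl, rfl⟩ := h
    have : T = T' := Finset.val_injective (hC1.symm.trans hC1')
    subst this
    rfl
  · rintro ⟨f, hf1, hf2⟩
    cases f with
    | nil => exact absurd hf1.symm (by simpa [lab] using hS.ne_empty)
    | cons a c s =>
      simp only [lab] at hf1
      rw [← Multiset.cons_add] at hf1
      obtain ⟨T, hT, h1, h2⟩ := split_val hf1
      exact ⟨⟨⟨T, hT⟩, ⟨⟨a, c⟩, h1, hf2.1, hf2.2.1⟩, ⟨s, h2, hf2.2.2⟩⟩, rfl⟩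

theorem finite_Tr (d : Bool) (S : Finset ℕ) : Finite (Tr d S) := by
  have := (card_For _ d S rfl).1
  refine Finite.of_injective (β := For d S) (fun t => ⟨cons t.1.1 t.1.2 nil, ?_, t.2.2.1, t.2.2.2, trivial⟩) ?_
  · simp [lab, t.2.1]
  · rintro ⟨⟨a, c⟩, h⟩ ⟨⟨a', c'⟩, h'⟩ heq
    have := congrArg Subtype.val heq
    simp only [cons.injEq] at this
    obtain ⟨rfl, rfl, -⟩ := this
    rfl

theorem card_Tr_rec (d : Bool) (n : ℕ) (S : Finset ℕ) (hS : S.card = n + 1) (a : ℕ → ℕ)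
    (ha : ∀ T ⊆ S, Nat.card (Tr d T) = a T.card) :
    ∑ k ∈ Finset.range (n+2), (n+1).choose k * (a k * (n+1-k+1)^(n+1-k-1)) = (n+2)^n := by
  obtain ⟨e⟩ := decomp2 d S (Finset.card_pos.1 (by omega))
  have h := (card_For _ d S hS).2
  rw [← Nat.card_congr e] at h
  have f1 : ∀ T : {T // T ∈ S.powerset}, Finite (Tr d T.1) := fun T => finite_Tr _ _
  have f2 : ∀ T : {T // T ∈ S.powerset}, Finite (For d (S \ T.1)) := fun T => (card_For _ d _ rfl).1
  rw [Nat.card_sigma] at h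
  have : ∀ T : {T // T ∈ S.powerset}, Nat.card (Tr d T.1 × For d (S \ T.1))
     = (fun k => a k * (n+1-k+1)^(n+1-k-1)) T.1.card := by
    intro T
    have h1 := Finset.mem_powerset.1 T.2
    rw [Nat.card_prod, ha _ h1, (card_For _ d _ rfl).2, Finset.card_sdiff_of_subset h1, hS]
  simp only [this] at h
  rw [Finset.sum_coe_sort S.powerset (fun T => (fun k => a k * (n+1-k+1)^(n+1-k-1)) T.card), Finset.sum_powerset_apply_card (fun k => a k * (n+1-k+1)^(n+1-k-1)), hS] at h
  simpa using h
theorem card_Tr (d : Bool) (n : ℕ) : ∀ S : Finset ℕ, S.card = n + 1 → Nat.card (Tr d S) = n^n := by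
  induction n using Nat.strong_induction_on with
  | _ n ih =>
    intro S hS
    let a : ℕ → ℕ := fun k => if k = n + 1 then Nat.card (Tr d S) else if k = 0 then 0 else (k-1)^(k-1)
    have hrec := card_Tr_rec d n S hS a (by
      intro T hT
      by_cases h1 : T.card = n + 1
      · have : T = S := Finset.eq_of_subset_of_card_le hT (by omega)
        simp [a, hS, this]
      · by_cases h0 : T.card = 0
        · have : IsEmpty (Tr d T) := ⟨fun t => by
            have := congrArg Multiset.card t.2.1
            simp [h0] at this⟩
          simp [a, h0]
        · have := Finset.card_le_card hT
          simp only [a, h1, h0, if_false]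
          exact ih (T.card - 1) (by omega) T (by omega))
    have := num2 n a (by simp [a]) hrec (by
      intro k hk
      have : k ≠ n := by omega
      simp [a, this])
    simpa [a] using this

def toL : BF → List LTree
  | nil => []
  | cons a c s => LTree.node a (toL c) :: toL s

theorem toL_inj : Function.Injective toL := by
  intro f
  induction f with
  | nil => intro g; cases g <;> simp [toL]
  | cons a c s ihc ihs =>
    intro g h
    cases g with
    | nil => simp [toL] at h
    | cons a' c' s' =>
      simp only [toL, List.cons.injEq, LTree.node.injEq] at h
      rw [h.1.1, ihc h.1.2, ihs h.2]

theorem toL_surj : ∀ l : List LTree, ∃ f, toL f = l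
  | [] => ⟨nil, rfl⟩
  | LTree.node a ts :: l => by
    obtain ⟨c, hc⟩ := toL_surj ts
    obtain ⟨s, hs⟩ := toL_surj l
    exact ⟨cons a c s, by simp [toL, hc, hs]⟩

theorem labels_node (a : ℕ) (ts : List LTree) :
    (LTree.node a ts).labels = a :: (ts.map LTree.labels).flatten := by
  rw [LTree.labels]; simp

theorem altFrom_node (a : ℕ) (d : Bool) (c : ℕ) (ts : List LTree) :
    LTree.altFrom a d (LTree.node c ts) ↔ dlt d c a ∧ ∀ x ∈ ts, LTree.altFrom c (!d) x := by
  rw [LTree.altFrom]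
  simp [dlt]

theorem labels_toL (f : BF) : (((toL f).map LTree.labels).flatten : Multiset ℕ) = lab f := by
  induction f with
  | nil => simp [toL, lab]
  | cons a c s ihc ihs =>
    simp only [toL, lab, List.map_cons, List.flatten_cons, labels_node, ← ihc, ← ihs]
    simp

theorem altFrom_toL (f : BF) : ∀ (a : ℕ) (d : Bool),
    (∀ t ∈ toL f, LTree.altFrom a d t) ↔ (∀ r ∈ roots f, dlt d r a) ∧ alt (!d) f := by
  induction f with
  | nil => simp [toL, roots, alt]
  | cons b c s ihc ihs =>
    intro a d
    simp only [toL, roots, alt, List.forall_mem_cons, altFrom_node, ihc, ihs, Set.forall_mem_insert]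
    tauto

/-- common form of both types -/
def AltD (d : Bool) : LTree → Prop
  | .node a ts => ∀ t ∈ ts, LTree.altFrom a d t

theorem valid_iff (n : ℕ) (t : LTree) : t.Valid n ↔ (t.labels : Multiset ℕ) = (Finset.Icc 1 (n+1)).val := by
  unfold LTree.Valid
  constructor
  · rintro ⟨h1, h2, h3⟩
    have : (⟨(t.labels : Multiset ℕ), h1⟩ : Finset ℕ) = Finset.Icc 1 (n+1) := by
      apply Finset.eq_of_subset_of_card_le
      · intro x hx; exact h3 x hx
      · have hc : Multiset.card (t.labels : Multiset ℕ) = n + 1 := h2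
        rw [Nat.card_Icc]; exact hc.ge
    exact congrArg Finset.val this
  · intro h
    refine ⟨?_, ?_, ?_⟩
    · rw [← Multiset.coe_nodup, h]; exact Finset.nodup _
    · rw [← Multiset.coe_card, h]; simp
    · intro a ha
      rw [← Multiset.mem_coe, h] at ha; exact ha

theorem card_AltD (n : ℕ) (d : Bool) : Nat.card {t : LTree // t.Valid n ∧ AltD d t} = n^n := by
  rw [← card_Tr d n (Finset.Icc 1 (n+1)) (by simp)]
  let φ : Tr d (Finset.Icc 1 (n+1)) → {t : LTree // t.Valid n ∧ AltD d t} :=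
    fun t => ⟨LTree.node t.1.1 (toL t.1.2),
      by rw [valid_iff, labels_node, ← Multiset.cons_coe, labels_toL, t.2.1],
      (altFrom_toL _ _ _).2 t.2.2⟩
  refine (Nat.card_congr (Equiv.ofBijective φ ⟨?_, ?_⟩)).symm
  · rintro ⟨⟨a, c⟩, h⟩ ⟨⟨a', c'⟩, h'⟩ heq
    have := congrArg Subtype.val heq
    simp only [φ, LTree.node.injEq] at this
    obtain ⟨rfl, h2⟩ := this
    obtain rfl := toL_inj h2
    rfl
  · rintro ⟨⟨a, ts⟩, h1, h2⟩
    obtain ⟨c, rfl⟩ := toL_surj ts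
    rw [valid_iff, labels_node, ← Multiset.cons_coe, labels_toL] at h1
    exact ⟨⟨(a, c), h1, (altFrom_toL _ _ _).1 h2⟩, rfl⟩

end BF

theorem stmt_12 (n : ℕ) (hn : 1 ≤ n) :
    Nat.card {t : LTree // t.Valid n ∧ (t.AltI ∨ t.AltII)} = 2 * n ^ n ∧
    Nat.card {t : LTree // t.Valid n ∧ t.AltI} =
      Nat.card {t : LTree // t.Valid n ∧ t.AltII} := by
  have e1 : ∀ t : LTree, t.AltI ↔ BF.AltD true t := by rintro ⟨a, ts⟩; rfl
  have e2 : ∀ t : LTree, t.AltII ↔ BF.AltD false t := by rintro ⟨a, ts⟩; rfl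
  simp only [e1, e2]
  have h1 := BF.card_AltD n true
  have h2 := BF.card_AltD n false
  refine ⟨?_, by rw [h1, h2]⟩
  have hpos : n ^ n ≠ 0 := by positivity
  have hd : Disjoint {t : LTree | t.Valid n ∧ BF.AltD true t} {t : LTree | t.Valid n ∧ BF.AltD false t} := by
    rw [Set.disjoint_left]
    rintro ⟨a, ts⟩ ⟨hv, ha⟩ ⟨-, hb⟩
    cases ts with
    | nil =>
      have := hv.2.1
      simp [BF.labels_node] at this
      omega
    | cons t l =>
      obtain ⟨c, us⟩ := t
      have ha := (BF.altFrom_node _ _ _ _).1 (ha _ List.mem_cons_self)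
      have hb := (BF.altFrom_node _ _ _ _).1 (hb _ List.mem_cons_self)
      have ha := ha.1
      have hb := hb.1
      simp [BF.dlt] at ha hb
      omega
  have h1' : {t : LTree | t.Valid n ∧ BF.AltD true t}.ncard = n ^ n := h1
  have h2' : {t : LTree | t.Valid n ∧ BF.AltD false t}.ncard = n ^ n := h2
  have hu := Set.ncard_union_eq hd (Set.finite_of_ncard_ne_zero (h1'.trans_ne hpos))
    (Set.finite_of_ncard_ne_zero (h2'.trans_ne hpos))
  rw [h1', h2'] at hu
  rw [two_mul, ← hu]
  have : {t : LTree | t.Valid n ∧ (BF.AltD true t ∨ BF.AltD false t)} = {t : LTree | t.Valid n ∧ BF.AltD true t} ∪ {t : LTree | t.Valid n ∧ BF.AltD false t} := by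
    ext t; simp only [Set.mem_ofPred_eq, Set.mem_union]; tauto
  rw [← this]
  rfl
end

section
/- For every n ≥ 1, the sum over all noncrossing pair partitions π of [2n] of the number of linear extensions of the forest order F(π) equals n^n, where F(π) is the partial order on the n+1 blocks of π extended by the imaginary block, in which a block is covered by its nearest outer block, with covering relations alternately oriented: a block at odd depth is below its nearest outer block, and a block at even depth is above its nearest outer block. -/
/-- A noncrossing pair partition of `{1, …, 2n}`, with blocks recorded as ordered
pairs `(i, j)` with `i < j`. -/
structure NCP (n : ℕ) : Type where
  blocks : Finset (ℕ × ℕ)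
  lt_of_mem : ∀ b ∈ blocks, b.1 < b.2
  mem_range : ∀ b ∈ blocks, 1 ≤ b.1 ∧ b.2 ≤ 2 * n
  cover : ∀ m, 1 ≤ m → m ≤ 2 * n → ∃! b, b ∈ blocks ∧ (m = b.1 ∨ m = b.2)
  noncrossing : ∀ b ∈ blocks, ∀ c ∈ blocks, ¬(b.1 < c.1 ∧ c.1 < b.2 ∧ b.2 < c.2)

/-- `c` is an outer block of `b`. -/
def IsOuter (c b : ℕ × ℕ) : Prop := c.1 < b.1 ∧ b.2 < c.2

/-- `c` is the nearest outer block of `b` in the pair partition `π`. -/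
def NearestOuter {n : ℕ} (π : NCP n) (c b : ℕ × ℕ) : Prop :=
  c ∈ π.blocks ∧ b ∈ π.blocks ∧ IsOuter c b ∧
    ∀ d ∈ π.blocks, IsOuter d b → d.1 ≤ c.1

open Classical in
/-- The depth of a block `b` of `π`: the imaginary block has depth `0`, and the
depth of a block is one plus the number of blocks strictly enclosing it. -/
noncomputable def blockDepth {n : ℕ} (π : NCP n) (b : ℕ × ℕ) : ℕ :=
  1 + (π.blocks.filter fun c => IsOuter c b).card


/-- Normalised Abel polynomials `t (t + n z)^(n-1) / n!`. -/
noncomputable def abelE {R : Type} [CommRing R] [Algebra ℚ R] (z : R) : ℕ → R → R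
  | 0, _ => 1
  | (n+1), t => ((1 : ℚ) / (n+1).factorial) • (t * (t + (n+1 : ℕ) * z) ^ n)

lemma poly_eq_of_derivative {R : Type} [CommRing R] [Algebra ℚ R] (p : Polynomial R)
    (h : Polynomial.derivative p = 0) (h0 : p.eval 0 = 0) : p = 0 := by
  ext n
  cases n with
  | zero => simpa [Polynomial.coeff_zero_eq_eval_zero] using h0
  | succ n =>
    have h1 := congrArg (fun q => Polynomial.coeff q n) h
    simp only [Polynomial.coeff_derivative, Polynomial.coeff_zero] at h1
    have h2 : ((1:ℚ)/(n+1)) • (p.coeff (n+1) * ((n:R)+1)) = p.coeff (n+1) := by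
      have : ((n:R)+1) = algebraMap ℚ R (n+1) := by simp
      rw [this, Algebra.smul_def, mul_comm, mul_assoc, ← map_mul]
      have h3 : ((n:ℚ)+1) * (1/(n+1)) = 1 := by
        have : ((n:ℚ)+1) ≠ 0 := by positivity
        field_simp
      rw [h3]; simp
    rw [← h2, h1]; simp

lemma abelE_derivative {R : Type} [CommRing R] [Algebra ℚ R] (z : R) (n : ℕ) (u : Polynomial R)
    (hu : Polynomial.derivative u = 1) :
    Polynomial.derivative (abelE (Polynomial.C z) (n+1) u)
      = abelE (Polynomial.C z) n (u + Polynomial.C z) := by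
  cases n with
  | zero => simp [abelE, hu]
  | succ n =>
    simp only [abelE, Polynomial.derivative_smul, Polynomial.derivative_mul, hu,
      Polynomial.derivative_pow, Polynomial.derivative_add, Polynomial.derivative_C,
      Polynomial.derivative_natCast]
    have hf : ((1:ℚ)/(n+1).factorial) = ((1:ℚ)/(n+1+1).factorial) * ((n+1+1 : ℕ):ℚ) := by
      rw [Nat.factorial_succ (n+1)]
      have : ((n+1).factorial : ℚ) ≠ 0 := by positivity
      push_cast
      field_simp
    rw [hf, mul_smul]
    congr 1
    rw [Algebra.smul_def]
    simp only [map_natCast, Nat.add_sub_cancel]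
    push_cast
    ring

lemma abelE_eval {R : Type} [CommRing R] [Algebra ℚ R] (z t : R) (n : ℕ) (u : Polynomial R) :
    (abelE (Polynomial.C z) n u).eval t = abelE z n (u.eval t) := by
  cases n <;> simp [abelE]

lemma abelE_zero {R : Type} [CommRing R] [Algebra ℚ R] (z : R) (n : ℕ) :
    abelE z (n+1) 0 = 0 := by simp [abelE]

theorem abelE_add (n : ℕ) : ∀ {R : Type} [CommRing R] [Algebra ℚ R] (z s t : R),
    ∑ k ∈ Finset.range (n+1), abelE z k s * abelE z (n-k) t = abelE z n (s+t) := by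
  induction n with
  | zero => intros; simp [abelE]
  | succ n ih =>
    intro R _ _ z s t
    have key : ∑ k ∈ Finset.range (n+1+1), abelE (Polynomial.C z) k (Polynomial.C s) *
        abelE (Polynomial.C z) (n+1-k) Polynomial.X
        - abelE (Polynomial.C z) (n+1) (Polynomial.C s + Polynomial.X) = 0 := by
      apply poly_eq_of_derivative
      · have hc : ∀ k, Polynomial.derivative (abelE (Polynomial.C z) k (Polynomial.C s)) = 0 := by
          intro k
          cases k with
          | zero => simp [abelE]
          | succ k => simp [abelE, Polynomial.derivative_pow]
        rw [Polynomial.derivative_sub, abelE_derivative _ _ _ (by simp), Finset.sum_range_succ,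
          Polynomial.derivative_add, Polynomial.derivative_sum]
        have h1 : Polynomial.derivative (abelE (Polynomial.C z) (n+1) (Polynomial.C s) *
          abelE (Polynomial.C z) (n+1-(n+1)) Polynomial.X) = 0 := by
          rw [Polynomial.derivative_mul, hc]; simp [abelE]
        rw [h1, add_assoc (Polynomial.C s), ← ih, add_zero, sub_eq_zero]
        apply Finset.sum_congr rfl
        intro k hk
        have : n + 1 - k = (n - k) + 1 := by
          have := Finset.mem_range.1 hk; omega
        rw [Polynomial.derivative_mul, hc, this, abelE_derivative _ _ _ (by simp)]
        simp
      · simp only [Polynomial.eval_sub, Polynomial.eval_finsetSum, Polynomial.eval_mul, abelE_eval,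
          Polynomial.eval_C, Polynomial.eval_X, Polynomial.eval_add, add_zero]
        rw [Finset.sum_range_succ, Finset.sum_eq_zero]
        · simp [abelE]
        · intro k hk
          have : n + 1 - k = (n - k) + 1 := by
            have := Finset.mem_range.1 hk; omega
          rw [this, abelE_zero, mul_zero]
    have := congrArg (Polynomial.eval t) key
    simp only [Polynomial.eval_sub, Polynomial.eval_finsetSum, Polynomial.eval_mul, abelE_eval,
          Polynomial.eval_C, Polynomial.eval_X, Polynomial.eval_add, Polynomial.eval_zero] at this
    exact sub_eq_zero.1 this

/-- The recursion satisfied by the Abel polynomials. -/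
theorem abelE_rec {R : Type} [CommRing R] [Algebra ℚ R] (n : ℕ) (z t : R) :
    ∑ k ∈ Finset.range (n+1), (- abelE z (k+1) (-t)) * abelE z (n-k) t = abelE z (n+1) t := by
  have h := abelE_add (n+1) z (-t) t
  rw [Finset.sum_range_succ', neg_add_cancel, abelE_zero] at h
  simp only [Nat.add_sub_add_right, Nat.sub_zero] at h
  simp only [neg_mul, Finset.sum_neg_distrib]
  rw [neg_eq_iff_add_eq_zero, ← h]
  simp [abelE]

lemma abelE_mul_sq_zero {R : Type} [CommRing R] [Algebra ℚ R] (n : ℕ) (z t x : R) (hx : x * x = 0) :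
    x * abelE z n (t + x) = x * abelE z n t := by
  cases n with
  | zero => simp [abelE]
  | succ n =>
    have h : ∀ (u : R) m, x * (u + x)^m = x * u^m := by
      intro u m
      induction m with
      | zero => simp
      | succ m ih =>
        rw [pow_succ, ← mul_assoc, ih, pow_succ, mul_add, mul_right_comm x (u^m) x, hx]; ring
    simp only [abelE, mul_smul_comm]
    congr 1
    have h2 := h (t + (n+1:ℕ)*z) n
    rw [show t + x + ((n+1:ℕ):R)*z = t + (n+1:ℕ)*z + x by ring]
    calc _ = (t + x) * (x * (t + (n+1:ℕ)*z + x)^n) := by ring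
      _ = t * (x * (t + (n+1:ℕ)*z)^n) + (x*x) * (t + (n+1:ℕ)*z)^n := by rw [h2]; ring
      _ = _ := by rw [hx]; ring

lemma abelE_step {R : Type} [CommRing R] [Algebra ℚ R] (n : ℕ) (z t x : R) (hx : x * x = 0) :
    (- abelE z (n+1) (-(t + x))) = (- abelE z (n+1) (-t)) + x * abelE z n (z - (t + x)) := by
  have h0 : x * abelE z n (z - (t + x)) = x * abelE z n (z - t) := by
    have := abelE_mul_sq_zero n z (z - (t+x)) x hx
    rw [← this]; congr 2; ring
  rw [h0]
  cases n with
  | zero => simp [abelE]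
  | succ n =>
    have h : ∀ (u : R) m, (u - x)^(m+1) = u^(m+1) - (m+1:ℕ) * x * u^m := by
      intro u m
      induction m with
      | zero => simp
      | succ m ih =>
        rw [pow_succ, ih]
        push_cast
        linear_combination ((m+1) * u^m) * hx
    simp only [abelE]
    have hf : ((1:ℚ)/(n+1).factorial) = ((1:ℚ)/(n+1+1).factorial) * ((n+1+1 : ℕ):ℚ) := by
      rw [Nat.factorial_succ (n+1)]
      have : ((n+1).factorial : ℚ) ≠ 0 := by positivity
      push_cast
      field_simp
    rw [hf, mul_smul, mul_smul_comm, ← smul_neg, ← smul_neg, ← smul_add]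
    congr 1
    rw [Algebra.smul_def]
    simp only [map_natCast]
    rw [show -(t+x) + ((n+1+1:ℕ):R)*z = (-t + (n+1+1:ℕ)*z) - x by ring, h,
      show z - t + ((n+1:ℕ):R)*z = -t + (n+1+1:ℕ)*z by push_cast; ring]
    push_cast
    generalize hu : -t + ((n:R)+1+1)*z = u
    have hz : ((n:R)+1+1)*z = u + t := by rw [← hu]; ring
    linear_combination (-(n+1)*u^n) * hx + (-x * u^n) * hz

lemma sum_step {R ι : Type} [CommRing R] [Algebra ℚ R] [LinearOrder ι] (n : ℕ) (z : R)
    (x : ι → R) (hx : ∀ i, x i * x i = 0) (T : Finset ι) :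
    ∑ i ∈ T, x i * abelE z n (z - ∑ l ∈ T with l ≤ i, x l)
      = - abelE z (n+1) (-(∑ i ∈ T, x i)) := by
  induction T using Finset.induction_on_max with
  | empty => simp [abelE]
  | insert a T ha ih =>
    have hn : a ∉ T := fun h => lt_irrefl _ (ha a h)
    rw [Finset.sum_insert hn, Finset.sum_insert hn, add_comm (x a) (∑ i ∈ T, x i),
      abelE_step _ _ _ _ (hx a), ← ih, add_comm]
    congr 1
    · apply Finset.sum_congr rfl
      intro i hi
      rw [Finset.filter_insert, if_neg (not_le.2 (ha i hi))]
    · rw [Finset.filter_true_of_mem, Finset.sum_insert hn, add_comm]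
      intro i hi
      rcases Finset.mem_insert.1 hi with rfl | h
      · exact le_rfl
      · exact (ha i h).le

lemma sum_step_lt {R ι : Type} [CommRing R] [Algebra ℚ R] [LinearOrder ι] [Fintype ι] (n : ℕ)
    (x : ι → R) (hx : ∀ i, x i * x i = 0) (j : ι) :
    ∑ i with i < j, x i * abelE (∑ i, x i) n (∑ l with i < l, x l)
      = - abelE (∑ i, x i) (n+1) (-(∑ i with i < j, x i)) := by
  rw [← sum_step n _ x hx]
  apply Finset.sum_congr rfl
  intro i hi
  congr 2
  rw [Finset.filter_filter, eq_sub_iff_add_eq, add_comm,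
    ← Finset.sum_filter_add_sum_filter_not Finset.univ (fun l => l ≤ i)]
  simp only [not_le]
  congr 2
  ext l
  simp only [Finset.mem_filter, Finset.mem_univ, true_and] at hi ⊢
  exact ⟨fun h => h.2, fun h => ⟨h.trans_lt hi, h⟩⟩

lemma sum_step_gt {R : Type} [CommRing R] [Algebra ℚ R] {N : ℕ} (n : ℕ)
    (x : Fin N → R) (hx : ∀ i, x i * x i = 0) (j : Fin N) :
    ∑ i with j < i, x i * abelE (∑ i, x i) n (∑ l with l < i, x l)
      = - abelE (∑ i, x i) (n+1) (-(∑ i with j < i, x i)) :=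
  sum_step_lt (ι := (Fin N)ᵒᵈ) n x hx j

lemma sum_step_univ {R : Type} [CommRing R] [Algebra ℚ R] {N : ℕ} (n : ℕ)
    (x : Fin N → R) (hx : ∀ i, x i * x i = 0) :
    ∑ i, x i * abelE (∑ i, x i) n (∑ l with l < i, x l)
      = - abelE (∑ i, x i) (n+1) (-(∑ i, x i)) := by
  have := sum_step (ι := (Fin N)ᵒᵈ) n (∑ i, x i) x hx (Finset.univ : Finset (Fin N))
  refine Eq.trans ?_ this
  apply Finset.sum_congr rfl
  intro i _
  congr 2
  rw [eq_sub_iff_add_eq]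
  refine Eq.trans ?_ (Finset.sum_filter_add_sum_filter_not Finset.univ (fun l : Fin N => l < i) x)
  congr 1
  simp only [not_lt]
  rfl

lemma sum_pow_card {R ι : Type} [CommRing R] [DecidableEq ι]
    (x : ι → R) (hx : ∀ i, x i * x i = 0) (T : Finset ι) :
    (∑ i ∈ T, x i) ^ T.card = T.card.factorial * ∏ i ∈ T, x i ∧
    (∑ i ∈ T, x i) ^ (T.card+1) = 0 := by
  have h : ∀ (a u : R) m, a * a = 0 → (u + a)^(m+1) = u^(m+1) + (m+1:ℕ) * a * u^m := by
    intro a u m ha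
    induction m with
    | zero => simp
    | succ m ih =>
      rw [pow_succ, ih]
      push_cast
      linear_combination ((m+1) * u^m) * ha
  induction T using Finset.induction_on with
  | empty => simp
  | insert a T ha ih =>
    rw [Finset.sum_insert ha, Finset.card_insert_of_notMem ha, add_comm (x a),
      h _ _ _ (hx a), h _ _ _ (hx a), Finset.prod_insert ha, pow_succ _ (T.card+1), ih.1, ih.2,
      Nat.factorial_succ]
    constructor
    · push_cast; ring
    · simp

lemma exists_ring (N : ℕ) : ∃ (R : Type) (_ : CommRing R) (_ : Algebra ℚ R) (x : Fin N → R),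
    (∀ i, x i * x i = 0) ∧ ∀ q : ℚ, q • ∏ i, x i = 0 → q = 0 := by
  induction N with
  | zero => exact ⟨ℚ, inferInstance, inferInstance, fun i => i.elim0, fun i => i.elim0, by simp⟩
  | succ N ih =>
    obtain ⟨R, _, _, x, hx, hq⟩ := ih
    refine ⟨TrivSqZeroExt R R, inferInstance, inferInstance,
      Fin.cons (TrivSqZeroExt.inr 1) (fun i => TrivSqZeroExt.inl (x i)), ?_, ?_⟩
    · intro i
      refine Fin.cases ?_ (fun i => ?_) i
      · simp
      · simp [← TrivSqZeroExt.inl_mul, hx]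
    · intro q h
      apply hq q
      rw [Fin.prod_univ_succ] at h
      simp only [Fin.cons_zero, Fin.cons_succ] at h
      have h1 : (∏ i, (TrivSqZeroExt.inl (x i) : TrivSqZeroExt R R))
          = TrivSqZeroExt.inl (∏ i, x i) :=
        (map_prod (TrivSqZeroExt.inlHom R R) _ _).symm
      rw [h1] at h
      have := congrArg TrivSqZeroExt.snd h
      simpa using this

/-- Labelled blocks. -/
abbrev LBlk (N : ℕ) := (ℕ × ℕ) × Fin N

/-- The order relation between a child label and its parent label. -/
def relS {N : ℕ} (s : Bool) (p q : Fin N) : Prop := if s then p < q else q < p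

/-- All labelled blocks lie in the interval `[lo+1, lo+len]`. -/
def InRg {N : ℕ} (lo len : ℕ) (C : Finset (LBlk N)) : Prop :=
  ∀ c ∈ C, lo + 1 ≤ c.1.1 ∧ c.1.1 < c.1.2 ∧ c.1.2 ≤ lo + len

open Classical in
/-- Depth of a labelled block. -/
noncomputable def ldepth {N : ℕ} (C : Finset (LBlk N)) (c : LBlk N) : ℕ :=
  1 + (C.filter fun d => IsOuter d.1 c.1).card

/-- A labelled noncrossing pairing of `[lo+1, lo+len]`, with labels alternating, starting with
orientation `s` below a root labelled `j`. -/
structure LSpec {N : ℕ} (lo len : ℕ) (s : Bool) (j : Fin N) (C : Finset (LBlk N)) : Prop where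
  rg : InRg lo len C
  cover : ∀ m, lo + 1 ≤ m → m ≤ lo + len → ∃! c, c ∈ C ∧ (m = c.1.1 ∨ m = c.1.2)
  nc : ∀ b ∈ C, ∀ c ∈ C, ¬(b.1.1 < c.1.1 ∧ c.1.1 < b.1.2 ∧ b.1.2 < c.1.2)
  par : ∀ c ∈ C, ∀ d ∈ C, IsOuter d.1 c.1 → (∀ e ∈ C, IsOuter e.1 c.1 → e.1.1 ≤ d.1.1) →
    (Odd (ldepth C c) → relS s c.2 d.2) ∧ (¬ Odd (ldepth C c) → relS (!s) c.2 d.2)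
  top : ∀ c ∈ C, (∀ d ∈ C, ¬ IsOuter d.1 c.1) → relS s c.2 j

lemma LSpec.card {N lo len : ℕ} {s : Bool} {j : Fin N} {C : Finset (LBlk N)}
    (h : LSpec lo len s j C) : len = 2 * C.card := by
  classical
  have h1 : Finset.Icc (lo+1) (lo+len) = C.biUnion (fun c => {c.1.1, c.1.2}) := by
    ext m
    simp only [Finset.mem_Icc, Finset.mem_biUnion, Finset.mem_insert, Finset.mem_singleton]
    constructor
    · rintro ⟨h1, h2⟩
      obtain ⟨c, hc, -⟩ := h.cover m h1 h2
      exact ⟨c, hc⟩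
    · rintro ⟨c, hc, hm⟩
      have := h.rg c hc
      omega
  have h2 := congrArg Finset.card h1
  rw [Finset.card_biUnion, Finset.sum_congr rfl (g := fun _ => 2)] at h2
  · simp at h2; omega
  · intro c hc
    exact Finset.card_pair (h.rg c hc).2.1.ne
  · intro c hc d hd hcd
    simp only [Function.onFun]
    rw [Finset.disjoint_left]
    intro m hm hm'
    simp only [Finset.mem_insert, Finset.mem_singleton] at hm hm'
    have := h.rg c hc
    exact hcd ((h.cover m (by omega) (by omega)).unique ⟨hc, hm⟩ ⟨hd, hm'⟩)

section
variable {N lo k m : ℕ} {s : Bool} {i j : Fin N} {C1 C2 : Finset (LBlk N)}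

/-- The composite labelled set. -/
def joinC (lo k : ℕ) (i : Fin N) (C1 C2 : Finset (LBlk N)) : Finset (LBlk N) :=
  insert ((lo+1, lo+k+2), i) (C1 ∪ C2)

lemma mem_joinC (c : LBlk N) : c ∈ joinC lo k i C1 C2 ↔
    c = ((lo+1, lo+k+2), i) ∨ c ∈ C1 ∨ c ∈ C2 := by
  simp [joinC]

lemma ldepth_join1 (h1 : InRg (lo+1) k C1) (h2 : InRg (lo+k+2) m C2) (c : LBlk N) (hc : c ∈ C1) :
    ldepth (joinC lo k i C1 C2) c = 1 + ldepth C1 c := by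
  classical
  unfold ldepth
  have hb : (((lo+1, lo+k+2), i) : LBlk N) ∉ C1.filter fun d => IsOuter d.1 c.1 := by
    intro h
    have := h1 _ (Finset.mem_filter.1 h).1
    simp at this
  rw [add_comm 1 (Finset.card (Finset.filter _ C1)), ← Finset.card_insert_of_notMem hb]
  congr 2
  ext d
  have hc1 := h1 c hc
  simp only [Finset.mem_filter, mem_joinC, Finset.mem_insert]
  simp only [IsOuter]
  constructor
  · rintro ⟨rfl | hd | hd, ho⟩
    · exact Or.inl rfl
    · exact Or.inr ⟨hd, ho⟩
    · have := h2 d hd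
      omega
  · rintro (rfl | ⟨hd, ho⟩)
    · exact ⟨Or.inl rfl, by simp; omega⟩
    · exact ⟨Or.inr (Or.inl hd), ho⟩

lemma ldepth_join2 (h1 : InRg (lo+1) k C1) (h2 : InRg (lo+k+2) m C2) (c : LBlk N) (hc : c ∈ C2) :
    ldepth (joinC lo k i C1 C2) c = ldepth C2 c := by
  classical
  unfold ldepth
  congr 2
  ext d
  have hc1 := h2 c hc
  simp only [Finset.mem_filter, mem_joinC]
  simp only [IsOuter]
  constructor
  · rintro ⟨rfl | hd | hd, ho⟩
    · simp at ho; omega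
    · have := h1 d hd; omega
    · exact ⟨hd, ho⟩
  · rintro ⟨hd, ho⟩
    exact ⟨Or.inr (Or.inr hd), ho⟩

lemma rg_join (h1 : InRg (lo+1) k C1) (h2 : InRg (lo+k+2) m C2) :
    InRg lo (k+m+2) (joinC lo k i C1 C2) := by
  intro c hc
  rcases (mem_joinC c).1 hc with rfl | hc | hc
  · simp; omega
  · have := h1 c hc; omega
  · have := h2 c hc; omega

lemma LSpec.join (h1 : LSpec (lo+1) k (!s) i C1) (h2 : LSpec (lo+k+2) m s j C2)
    (hij : relS s i j) : LSpec lo (k+m+2) s j (joinC lo k i C1 C2) := by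
  classical
  have r1 := h1.rg
  have r2 := h2.rg
  refine ⟨rg_join r1 r2, ?_, ?_, ?_, ?_⟩
  · intro q hq1 hq2
    by_cases hb : q = lo+1 ∨ q = lo+k+2
    · refine ⟨((lo+1, lo+k+2), i), ⟨(mem_joinC _).2 (Or.inl rfl), hb⟩, ?_⟩
      rintro c ⟨hc, hqc⟩
      rcases (mem_joinC c).1 hc with rfl | hc | hc
      · rfl
      · have := r1 c hc; omega
      · have := r2 c hc; omega
    · by_cases hk : q ≤ lo + 1 + k
      · obtain ⟨c, ⟨hc, hqc⟩, hu⟩ := h1.cover q (by omega) hk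
        refine ⟨c, ⟨(mem_joinC _).2 (Or.inr (Or.inl hc)), hqc⟩, ?_⟩
        rintro d ⟨hd, hqd⟩
        rcases (mem_joinC d).1 hd with rfl | hd | hd
        · exact absurd hqd hb
        · exact hu d ⟨hd, hqd⟩
        · have := r2 d hd; omega
      · obtain ⟨c, ⟨hc, hqc⟩, hu⟩ := h2.cover q (by omega) (by omega)
        refine ⟨c, ⟨(mem_joinC _).2 (Or.inr (Or.inr hc)), hqc⟩, ?_⟩
        rintro d ⟨hd, hqd⟩
        rcases (mem_joinC d).1 hd with rfl | hd | hd
        · exact absurd hqd hb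
        · have := r1 d hd; omega
        · exact hu d ⟨hd, hqd⟩
  · intro b hb c hc
    rcases (mem_joinC b).1 hb with rfl | hb | hb <;> rcases (mem_joinC c).1 hc with rfl | hc | hc
    · simp
    · have := r1 c hc; simp; omega
    · have := r2 c hc; simp; omega
    · have := r1 b hb; simp; omega
    · exact h1.nc b hb c hc
    · have := r1 b hb; have := r2 c hc; omega
    · have := r2 b hb; simp; omega
    · have := r2 b hb; have := r1 c hc; omega
    · exact h2.nc b hb c hc
  · intro c hc d hd ho hn
    rcases (mem_joinC c).1 hc with rfl | hc | hc
    · have := rg_join (i := i) r1 r2 d hd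
      simp [IsOuter] at ho; omega
    · have rc := r1 c hc
      rw [ldepth_join1 r1 r2 c hc]
      rcases (mem_joinC d).1 hd with rfl | hd | hd
      · have hno : ∀ e ∈ C1, ¬ IsOuter e.1 c.1 := by
          intro e he hoe
          have := hn e ((mem_joinC _).2 (Or.inr (Or.inl he))) hoe
          have := r1 e he
          simp at *; omega
        have h0 : ldepth C1 c = 1 := by
          unfold ldepth
          rw [Finset.filter_false_of_mem hno]; simp
        have := h1.top c hc hno
        rw [h0]
        exact ⟨fun h => absurd h (by decide), fun _ => this⟩
      · have := h1.par c hc d hd ho (fun e he => hn e ((mem_joinC _).2 (Or.inr (Or.inl he))))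
        rw [add_comm, Nat.odd_add_one, not_not]
        rw [Bool.not_not] at this
        exact ⟨this.2, this.1⟩
      · have := r2 d hd; simp only [IsOuter] at ho; omega
    · have rc := r2 c hc
      rw [ldepth_join2 r1 r2 c hc]
      rcases (mem_joinC d).1 hd with rfl | hd | hd
      · simp [IsOuter] at ho; omega
      · have := r1 d hd; simp only [IsOuter] at ho; omega
      · exact h2.par c hc d hd ho (fun e he => hn e ((mem_joinC _).2 (Or.inr (Or.inr he))))
  · intro c hc hn
    rcases (mem_joinC c).1 hc with rfl | hc | hc
    · exact hij
    · have := r1 c hc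
      refine absurd ?_ (hn _ ((mem_joinC _).2 (Or.inl rfl)))
      simp [IsOuter]; omega
    · exact h2.top c hc (fun d hd => hn d ((mem_joinC _).2 (Or.inr (Or.inr hd))))

lemma LSpec.unjoin (r1 : InRg (lo+1) k C1) (r2 : InRg (lo+k+2) m C2)
    (h : LSpec lo (k+m+2) s j (joinC lo k i C1 C2)) :
    LSpec (lo+1) k (!s) i C1 ∧ LSpec (lo+k+2) m s j C2 ∧ relS s i j := by
  classical
  have m1 : ∀ {c}, c ∈ C1 → c ∈ joinC lo k i C1 C2 := fun hc => (mem_joinC _).2 (Or.inr (Or.inl hc))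
  have m2 : ∀ {c}, c ∈ C2 → c ∈ joinC lo k i C1 C2 := fun hc => (mem_joinC _).2 (Or.inr (Or.inr hc))
  have mb : (((lo+1, lo+k+2), i) : LBlk N) ∈ joinC lo k i C1 C2 := (mem_joinC _).2 (Or.inl rfl)
  refine ⟨⟨r1, ?_, ?_, ?_, ?_⟩, ⟨r2, ?_, ?_, ?_, ?_⟩, ?_⟩
  · intro q hq1 hq2
    obtain ⟨c, ⟨hc, hqc⟩, hu⟩ := h.cover q (by omega) (by omega)
    refine ⟨c, ⟨?_, hqc⟩, fun d hd => hu d ⟨m1 hd.1, hd.2⟩⟩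
    rcases (mem_joinC c).1 hc with rfl | hc | hc
    · simp at hqc; omega
    · exact hc
    · have := r2 c hc; omega
  · exact fun b hb c hc => h.nc b (m1 hb) c (m1 hc)
  · intro c hc d hd ho hn
    have := h.par c (m1 hc) d (m1 hd) ho (by
      intro e he hoe
      rcases (mem_joinC e).1 he with rfl | he | he
      · have := r1 d hd; simp; omega
      · exact hn e he hoe
      · have := r2 e he; have := r1 c hc; simp only [IsOuter] at hoe; omega)
    rw [ldepth_join1 r1 r2 c hc, add_comm, Nat.odd_add_one, not_not] at this
    rw [Bool.not_not]
    exact ⟨this.2, this.1⟩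
  · intro c hc hno
    have rc := r1 c hc
    have := h.par c (m1 hc) _ mb (by simp [IsOuter]; omega) (by
      intro e he hoe
      rcases (mem_joinC e).1 he with rfl | he | he
      · simp
      · exact absurd hoe (hno e he)
      · have := r2 e he; simp only [IsOuter] at hoe; omega)
    have h0 : ldepth C1 c = 1 := by
      unfold ldepth
      rw [Finset.filter_false_of_mem hno]; simp
    rw [ldepth_join1 r1 r2 c hc, h0] at this
    exact this.2 (by decide)
  · intro q hq1 hq2
    obtain ⟨c, ⟨hc, hqc⟩, hu⟩ := h.cover q (by omega) (by omega)
    refine ⟨c, ⟨?_, hqc⟩, fun d hd => hu d ⟨m2 hd.1, hd.2⟩⟩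
    rcases (mem_joinC c).1 hc with rfl | hc | hc
    · simp at hqc; omega
    · have := r1 c hc; omega
    · exact hc
  · exact fun b hb c hc => h.nc b (m2 hb) c (m2 hc)
  · intro c hc d hd ho hn
    have rc := r2 c hc
    have := h.par c (m2 hc) d (m2 hd) ho (by
      intro e he hoe
      rcases (mem_joinC e).1 he with rfl | he | he
      · simp [IsOuter] at hoe; omega
      · have := r1 e he; simp only [IsOuter] at hoe; omega
      · exact hn e he hoe)
    rwa [ldepth_join2 r1 r2 c hc] at this
  · intro c hc hno
    have rc := r2 c hc
    apply h.top c (m2 hc)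
    intro e he hoe
    rcases (mem_joinC e).1 he with rfl | he | he
    · simp [IsOuter] at hoe; omega
    · have := r1 e he; simp only [IsOuter] at hoe; omega
    · exact hno e he hoe
  · apply h.top _ mb
    intro e he hoe
    have := h.rg e he
    simp [IsOuter] at hoe; omega

lemma LSpec.exists_join {n : ℕ} {C : Finset (LBlk N)} (h : LSpec lo (2*(n+1)) s j C) :
    ∃ k i C1 C2, k ≤ n ∧ relS s i j ∧ LSpec (lo+1) (2*k) (!s) i C1 ∧
      LSpec (lo+2*k+2) (2*(n-k)) s j C2 ∧ C = joinC lo (2*k) i C1 C2 := by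
  classical
  obtain ⟨⟨⟨p, q⟩, i⟩, ⟨hb, hbp⟩, hu⟩ := h.cover (lo+1) le_rfl (by omega)
  have rb := h.rg _ hb
  simp only at hbp rb
  have hp : p = lo+1 := by omega
  subst hp
  obtain ⟨k, hk⟩ : ∃ k, q = lo + k + 2 := ⟨q - lo - 2, by omega⟩
  obtain ⟨m, hm⟩ : ∃ m, 2*(n+1) = k+m+2 := ⟨2*(n+1) - k - 2, by omega⟩
  subst hk
  set C1 := C.filter (fun c => lo+1 < c.1.1 ∧ c.1.1 < lo+k+2) with hC1
  set C2 := C.filter (fun c => lo+k+2 < c.1.1) with hC2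
  have hne : ∀ c ∈ C, c ≠ ((lo+1, lo+k+2), i) → c.1.1 ≠ lo+1 ∧ c.1.1 ≠ lo+k+2 ∧ c.1.2 ≠ lo+k+2 := by
    intro c hc hcb
    refine ⟨fun e => hcb (hu c ⟨hc, by simp [e]⟩), fun e => hcb ?_, fun e => hcb ?_⟩
    · exact (h.cover (lo+k+2) (by omega) (by omega)).unique ⟨hc, by simp [e]⟩ ⟨hb, by simp⟩
    · exact (h.cover (lo+k+2) (by omega) (by omega)).unique ⟨hc, by simp [e]⟩ ⟨hb, by simp⟩
  have r1 : InRg (lo+1) k C1 := by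
    intro c hc
    obtain ⟨hc, h1, h2⟩ := Finset.mem_filter.1 hc
    have rc := h.rg c hc
    have hn := hne c hc (by rintro rfl; simp at h1)
    have := h.nc _ hb c hc
    simp only at this
    omega
  have r2 : InRg (lo+k+2) m C2 := by
    intro c hc
    obtain ⟨hc, h1⟩ := Finset.mem_filter.1 hc
    have rc := h.rg c hc
    omega
  have hC : C = joinC lo k i C1 C2 := by
    ext c
    rw [mem_joinC, hC1, hC2, Finset.mem_filter, Finset.mem_filter]
    constructor
    · intro hc
      by_cases hcb : c = ((lo+1, lo+k+2), i)
      · exact Or.inl hcb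
      · have := hne c hc hcb
        have := h.rg c hc
        rcases lt_or_ge c.1.1 (lo+k+2) with hl | hl
        · exact Or.inr (Or.inl ⟨hc, by omega, hl⟩)
        · exact Or.inr (Or.inr ⟨hc, by omega⟩)
    · rintro (rfl | hc | hc)
      · exact hb
      · exact hc.1
      · exact hc.1
  rw [hm, hC] at h
  obtain ⟨s1, s2, hij⟩ := h.unjoin r1 r2
  have c1 := s1.card
  obtain ⟨a, ha⟩ : ∃ a, k = 2 * a := ⟨_, c1⟩
  subst ha
  have : m = 2 * (n - a) := by omega
  subst this
  exact ⟨a, i, C1, C2, by omega, hij, s1, s2, hC⟩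

lemma joinC_inj {k' m' : ℕ} {i' : Fin N} {C1' C2' : Finset (LBlk N)}
    (r1 : InRg (lo+1) k C1) (r2 : InRg (lo+k+2) m C2)
    (r1' : InRg (lo+1) k' C1') (r2' : InRg (lo+k'+2) m' C2')
    (h : joinC lo k i C1 C2 = joinC lo k' i' C1' C2') :
    k = k' ∧ i = i' ∧ C1 = C1' ∧ C2 = C2' := by
  have hb : (((lo+1, lo+k+2), i) : LBlk N) ∈ joinC lo k' i' C1' C2' := by
    rw [← h]; exact (mem_joinC _).2 (Or.inl rfl)
  have : k = k' ∧ i = i' := by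
    rcases (mem_joinC _).1 hb with e | hc | hc
    · simp at e; exact e
    · have := r1' _ hc; simp at this
    · have := r2' _ hc; simp at this; omega
  obtain ⟨rfl, rfl⟩ := this
  have hm : ∀ c, (c = ((lo+1, lo+k+2), i) ∨ c ∈ C1 ∨ c ∈ C2) ↔
      (c = ((lo+1, lo+k+2), i) ∨ c ∈ C1' ∨ c ∈ C2') := by
    intro c; rw [← mem_joinC, ← mem_joinC, h]
  refine ⟨rfl, rfl, ?_, ?_⟩
  · ext c
    constructor
    · intro hc
      have := r1 c hc
      rcases (hm c).1 (Or.inr (Or.inl hc)) with rfl | hc | hc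
      · simp at this
      · exact hc
      · have := r2' c hc; omega
    · intro hc
      have := r1' c hc
      rcases (hm c).2 (Or.inr (Or.inl hc)) with rfl | hc | hc
      · simp at this
      · exact hc
      · have := r2 c hc; omega
  · ext c
    constructor
    · intro hc
      have := r2 c hc
      rcases (hm c).1 (Or.inr (Or.inr hc)) with rfl | hc | hc
      · simp at this; omega
      · have := r1' c hc; omega
      · exact hc
    · intro hc
      have := r2' c hc
      rcases (hm c).2 (Or.inr (Or.inr hc)) with rfl | hc | hc
      · simp at this; omega
      · have := r1 c hc; omega
      · exact hc

end

open Classical in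
/-- The finite set of all valid labelled pairings. -/
noncomputable def LSet {N : ℕ} (lo n : ℕ) (s : Bool) (j : Fin N) : Finset (Finset (LBlk N)) :=
  (((Finset.range (lo + 2*n + 1) ×ˢ Finset.range (lo + 2*n + 1)) ×ˢ Finset.univ).powerset).filter
    fun C => LSpec lo (2*n) s j C

lemma mem_LSet {N : ℕ} {lo n : ℕ} {s : Bool} {j : Fin N} {C : Finset (LBlk N)} :
    C ∈ LSet lo n s j ↔ LSpec lo (2*n) s j C := by
  simp only [LSet, Finset.mem_filter, Finset.mem_powerset, and_iff_right_iff_imp]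
  intro h c hc
  have := h.rg c hc
  simp; omega

open Classical in
lemma LSet_sum_succ {N : ℕ} {R : Type} [CommRing R] (x : Fin N → R)
    (lo n : ℕ) (s : Bool) (j : Fin N) :
    ∑ C ∈ LSet lo (n+1) s j, ∏ c ∈ C, x c.2 =
      ∑ k ∈ Finset.range (n+1),
        (∑ i with relS s i j, x i * ∑ C ∈ LSet (lo+1) k (!s) i, ∏ c ∈ C, x c.2) *
        ∑ C ∈ LSet (lo+2*k+2) (n-k) s j, ∏ c ∈ C, x c.2 := by
  have e : ∀ k, (∑ i with relS s i j, x i * ∑ C ∈ LSet (lo+1) k (!s) i, ∏ c ∈ C, x c.2) *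
        ∑ C ∈ LSet (lo+2*k+2) (n-k) s j, ∏ c ∈ C, x c.2 =
      ∑ i with relS s i j, ∑ p ∈ LSet (lo+1) k (!s) i ×ˢ LSet (lo+2*k+2) (n-k) s j,
        x i * (∏ c ∈ p.1, x c.2) * (∏ c ∈ p.2, x c.2) := by
    intro k
    rw [Finset.sum_mul]
    apply Finset.sum_congr rfl
    intro i _
    rw [Finset.sum_product, mul_assoc, Finset.sum_mul_sum, Finset.mul_sum]
    apply Finset.sum_congr rfl
    intro C _
    rw [Finset.mul_sum]
    exact Finset.sum_congr rfl fun _ _ => (mul_assoc _ _ _).symm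
  simp_rw [e]
  rw [← Finset.sum_product', Finset.sum_sigma']
  symm
  refine Finset.sum_bij (fun p _ => joinC lo (2*p.1.1) p.1.2 p.2.1 p.2.2) ?_ ?_ ?_ ?_
  · rintro ⟨⟨k, i⟩, C1, C2⟩ hp
    simp only [Finset.mem_sigma, Finset.mem_product, Finset.mem_range, Finset.mem_filter,
      Finset.mem_univ, true_and, mem_LSet] at hp ⊢
    obtain ⟨⟨hk, hij⟩, h1, h2⟩ := hp
    have := h1.join h2 hij
    rwa [show 2*k + 2*(n-k) + 2 = 2*(n+1) by omega] at this
  · rintro ⟨⟨k, i⟩, C1, C2⟩ hp ⟨⟨k', i'⟩, C1', C2'⟩ hp' he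
    simp only [Finset.mem_sigma, Finset.mem_product, Finset.mem_range, Finset.mem_filter,
      Finset.mem_univ, true_and, mem_LSet] at hp hp' he
    obtain ⟨hk, rfl, rfl, rfl⟩ := joinC_inj hp.2.1.rg hp.2.2.rg hp'.2.1.rg hp'.2.2.rg he
    obtain rfl : k = k' := by omega
    rfl
  · intro C hC
    rw [mem_LSet] at hC
    obtain ⟨k, i, C1, C2, hk, hij, h1, h2, rfl⟩ := hC.exists_join
    refine ⟨⟨⟨k, i⟩, C1, C2⟩, ?_, rfl⟩
    simp only [Finset.mem_sigma, Finset.mem_product, Finset.mem_range, Finset.mem_filter,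
      Finset.mem_univ, true_and, mem_LSet]
    exact ⟨⟨by omega, hij⟩, h1, h2⟩
  · rintro ⟨⟨k, i⟩, C1, C2⟩ hp
    simp only [Finset.mem_sigma, Finset.mem_product, Finset.mem_range, Finset.mem_filter,
      Finset.mem_univ, true_and, mem_LSet] at hp ⊢
    obtain ⟨⟨hk, hij⟩, h1, h2⟩ := hp
    unfold joinC
    rw [Finset.prod_insert, Finset.prod_union, mul_assoc]
    · rw [Finset.disjoint_left]
      intro c hc hc'
      have := h1.rg c hc; have := h2.rg c hc'
      omega
    · rw [Finset.mem_union]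
      rintro (hc | hc)
      · have := h1.rg _ hc; simp at this
      · have := h2.rg _ hc; simp at this; omega

lemma LSet_zero {N : ℕ} (lo : ℕ) (s : Bool) (j : Fin N) : LSet lo 0 s j = {∅} := by
  ext C
  rw [mem_LSet, Finset.mem_singleton]
  constructor
  · intro h
    have := h.card
    exact Finset.card_eq_zero.1 (by omega)
  · rintro rfl
    exact ⟨by intro c hc; simp at hc, by intro m h1 h2; omega, by simp, by simp, by simp⟩

lemma LSet_sum {N : ℕ} {R : Type} [CommRing R] [Algebra ℚ R] (x : Fin N → R)
    (hx : ∀ i, x i * x i = 0) (n : ℕ) : ∀ (lo : ℕ) (j : Fin N),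
    (∑ C ∈ LSet lo n true j, ∏ c ∈ C, x c.2 = abelE (∑ i, x i) n (∑ i with i < j, x i)) ∧
    (∑ C ∈ LSet lo n false j, ∏ c ∈ C, x c.2 = abelE (∑ i, x i) n (∑ i with j < i, x i)) := by
  classical
  induction n using Nat.strong_induction_on with
  | _ n ih =>
    intro lo j
    cases n with
    | zero => simp [LSet_zero, abelE]
    | succ n =>
      constructor
      · rw [LSet_sum_succ, ← abelE_rec]
        apply Finset.sum_congr rfl
        intro k hk
        have hk := Finset.mem_range.1 hk
        rw [(ih (n-k) (by omega) _ _).1, ← sum_step_lt k x hx j]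
        congr 1
        apply Finset.sum_congr
        · ext i; simp [relS]
        · intro i _
          rw [Bool.not_true, (ih k (by omega) _ _).2]
      · rw [LSet_sum_succ, ← abelE_rec]
        apply Finset.sum_congr rfl
        intro k hk
        have hk := Finset.mem_range.1 hk
        rw [(ih (n-k) (by omega) _ _).2, ← sum_step_gt k x hx j]
        congr 1
        apply Finset.sum_congr
        · ext i; simp [relS]
        · intro i _
          rw [Bool.not_false, (ih k (by omega) _ _).1]

lemma total_sum {n : ℕ} {R : Type} [CommRing R] [Algebra ℚ R] (x : Fin (n+1) → R)
    (hx : ∀ i, x i * x i = 0) :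
    ∑ j, x j * ∑ C ∈ LSet 0 n true j, ∏ c ∈ C, x c.2 = ((n:ℚ)^n) • ∏ i, x i := by
  have h1 := sum_pow_card x hx Finset.univ
  simp only [Finset.card_univ, Fintype.card_fin] at h1
  rw [Finset.sum_congr rfl (fun j _ => by rw [(LSet_sum x hx n 0 j).1]), sum_step_univ n x hx]
  simp only [abelE]
  generalize (∑ i, x i) = z at h1 ⊢
  have h2 : -z * (-z + ((n+1:ℕ):R) * z)^n = -((n:R)^n * z^(n+1)) := by
    rw [show -z + ((n+1:ℕ):R) * z = n * z by push_cast; ring, mul_pow]; ring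
  rw [h2, h1.1, smul_neg, neg_neg, Algebra.smul_def, Algebra.smul_def, ← mul_assoc, ← mul_assoc,
    ← map_natCast (algebraMap ℚ R), ← map_natCast (algebraMap ℚ R), ← map_pow, ← map_mul, ← map_mul]
  congr 2
  have : ((n+1).factorial : ℚ) ≠ 0 := by positivity
  field_simp

/-- All labels, including the root label, are distinct. -/
def GoodLab {N : ℕ} (j : Fin N) (C : Finset (LBlk N)) : Prop :=
  Set.InjOn Prod.snd (C : Set (LBlk N)) ∧ ∀ c ∈ C, c.2 ≠ j

lemma weight_good {n : ℕ} {R : Type} [CommRing R] (x : Fin (n+1) → R)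
    (j : Fin (n+1)) (C : Finset (LBlk (n+1))) (hC : C.card = n) (hg : GoodLab j C) :
    x j * ∏ c ∈ C, x c.2 = ∏ i, x i := by
  classical
  rw [← Finset.prod_image (f := x) (g := Prod.snd) hg.1, ← Finset.prod_insert]
  · congr 1
    rw [← Finset.card_eq_iff_eq_univ, Finset.card_insert_of_notMem, Finset.card_image_of_injOn hg.1,
      hC, Fintype.card_fin]
    intro h
    obtain ⟨c, hc, e⟩ := Finset.mem_image.1 h
    exact hg.2 c hc e
  · intro h
    obtain ⟨c, hc, e⟩ := Finset.mem_image.1 h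
    exact hg.2 c hc e

lemma weight_bad {N : ℕ} {R : Type} [CommRing R] (x : Fin N → R) (hx : ∀ i, x i * x i = 0)
    (j : Fin N) (C : Finset (LBlk N)) (hg : ¬ GoodLab j C) :
    x j * ∏ c ∈ C, x c.2 = 0 := by
  classical
  by_cases h : ∃ c ∈ C, c.2 = j
  · obtain ⟨c, hc, rfl⟩ := h
    rw [← Finset.mul_prod_erase C _ hc, ← mul_assoc, hx, zero_mul]
  · have h2 : ∃ c ∈ C, ∃ d ∈ C, c.2 = d.2 ∧ c ≠ d := by
      by_contra hcon
      push Not at hcon h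
      exact hg ⟨fun c hc d hd e => hcon c hc d hd e, h⟩
    obtain ⟨c, hc, d, hd, e, hne⟩ := h2
    rw [← Finset.mul_prod_erase C _ hc,
      ← Finset.mul_prod_erase (C.erase c) _ (Finset.mem_erase.2 ⟨hne.symm, hd⟩), e,
      ← mul_assoc (x d.2), hx, zero_mul, mul_zero]

open Classical in
lemma card_good (n : ℕ) :
    Nat.card {p : Fin (n+1) × Finset (LBlk (n+1)) //
      LSpec 0 (2*n) true p.1 p.2 ∧ GoodLab p.1 p.2} = n^n := by
  obtain ⟨R, _, _, x, hx, hq⟩ := exists_ring (n+1)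
  set G : Finset (Σ _ : Fin (n+1), Finset (LBlk (n+1))) :=
    (Finset.univ.sigma fun j => LSet 0 n true j).filter (fun p => GoodLab p.1 p.2) with hG
  have h1 : ((G.card : ℚ)) • ∏ i, x i = ((n:ℚ)^n) • ∏ i, x i := by
    rw [← total_sum x hx]
    simp_rw [Finset.mul_sum]
    rw [Finset.sum_sigma', ← Finset.sum_filter_add_sum_filter_not _ (fun p => GoodLab p.1 p.2),
      ← hG, Finset.sum_eq_card_nsmul (b := ∏ i, x i), Finset.sum_eq_zero, add_zero,
      Nat.cast_smul_eq_nsmul]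
    · intro p hp
      exact weight_bad x hx _ _ (Finset.mem_filter.1 hp).2
    · intro p hp
      obtain ⟨hp, hg⟩ := Finset.mem_filter.1 hp
      have := (mem_LSet.1 (Finset.mem_sigma.1 hp).2).card
      exact weight_good x _ _ (by omega) hg
  have h2 : (G.card : ℚ) = (n:ℚ)^n := by
    rw [← sub_eq_zero] at h1 ⊢
    rw [← sub_smul] at h1
    exact hq _ h1
  have h3 : G.card = n^n := by exact_mod_cast h2
  have h4 : Nat.card {p // p ∈ G} = G.card := by simp
  rw [← h3, ← h4]
  refine Nat.card_congr ⟨fun p => ⟨⟨p.1.1, p.1.2⟩, ?_⟩, fun p => ⟨(p.1.1, p.1.2), ?_⟩, ?_, ?_⟩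
  · simpa [hG, mem_LSet] using p.2
  · obtain ⟨hp, hg⟩ := Finset.mem_filter.1 p.2
    exact ⟨mem_LSet.1 (Finset.mem_sigma.1 hp).2, hg⟩
  · intro p; rfl
  · intro p; rfl

/-- The labelled block set of a labelled partition. -/
def toC {n N : ℕ} (π : NCP n) (lab : {b : ℕ × ℕ // b ∈ π.blocks} → Fin N) : Finset (LBlk N) :=
  π.blocks.attach.map ⟨fun b => (b.1, lab b), fun a b h => Subtype.ext (Prod.ext_iff.1 h).1⟩

section
variable {n N : ℕ} {π : NCP n} {lab : {b : ℕ × ℕ // b ∈ π.blocks} → Fin N}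

lemma mem_toC (c : LBlk N) : c ∈ toC π lab ↔ ∃ b : {b : ℕ × ℕ // b ∈ π.blocks}, (b.1, lab b) = c := by
  unfold toC
  rw [Finset.mem_map]
  constructor
  · rintro ⟨b, _, h⟩
    exact ⟨b, h⟩
  · rintro ⟨b, h⟩
    exact ⟨b, Finset.mem_attach _ _, h⟩

lemma mem_toC' (b : {b : ℕ × ℕ // b ∈ π.blocks}) : (b.1, lab b) ∈ toC π lab :=
  (mem_toC _).2 ⟨b, rfl⟩

lemma ldepth_toC (c : LBlk N) : ldepth (toC π lab) c = blockDepth π c.1 := by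
  classical
  unfold ldepth blockDepth
  congr 1
  refine Finset.card_bij (fun d _ => d.1) ?_ ?_ ?_
  · intro d hd
    obtain ⟨hd, ho⟩ := Finset.mem_filter.1 hd
    obtain ⟨b, rfl⟩ := (mem_toC _).1 hd
    exact Finset.mem_filter.2 ⟨b.2, ho⟩
  · intro d hd e he h
    obtain ⟨b, rfl⟩ := (mem_toC _).1 (Finset.mem_filter.1 hd).1
    obtain ⟨b', rfl⟩ := (mem_toC _).1 (Finset.mem_filter.1 he).1
    have : b = b' := Subtype.ext h
    rw [this]
  · intro b hb
    obtain ⟨hb, ho⟩ := Finset.mem_filter.1 hb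
    exact ⟨_, Finset.mem_filter.2 ⟨mem_toC' (lab := lab) ⟨b, hb⟩, ho⟩, rfl⟩

open Classical in
lemma LSpec_toC (j : Fin N) : LSpec 0 (2*n) true j (toC π lab) ↔
    (∀ b c : {b : ℕ × ℕ // b ∈ π.blocks}, NearestOuter π c.1 b.1 →
          if Odd (blockDepth π b.1) then lab b < lab c else lab c < lab b) ∧
    (∀ b : {b : ℕ × ℕ // b ∈ π.blocks}, (∀ d ∈ π.blocks, ¬ IsOuter d b.1) → lab b < j) := by
  constructor
  · intro h
    constructor
    · rintro b c ⟨-, -, ho, hn⟩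
      have := h.par _ (mem_toC' b) _ (mem_toC' c) ho (by
        intro e he
        obtain ⟨d, rfl⟩ := (mem_toC _).1 he
        exact hn d.1 d.2)
      rw [ldepth_toC] at this
      split_ifs with hodd
      · simpa [relS] using this.1 hodd
      · simpa [relS] using this.2 hodd
    · intro b hb
      have := h.top _ (mem_toC' b) (by
        intro e he
        obtain ⟨d, rfl⟩ := (mem_toC _).1 he
        exact hb d.1 d.2)
      simpa [relS] using this
  · rintro ⟨h1, h2⟩
    refine ⟨?_, ?_, ?_, ?_, ?_⟩
    · intro c hc
      obtain ⟨b, rfl⟩ := (mem_toC _).1 hc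
      have := π.lt_of_mem _ b.2
      have := π.mem_range _ b.2
      simp only; omega
    · intro m hm1 hm2
      obtain ⟨b, ⟨hb, hm⟩, hu⟩ := π.cover m (by omega) (by omega)
      refine ⟨_, ⟨mem_toC' ⟨b, hb⟩, hm⟩, ?_⟩
      rintro c ⟨hc, hmc⟩
      obtain ⟨d, rfl⟩ := (mem_toC _).1 hc
      have : d = ⟨b, hb⟩ := Subtype.ext (hu d.1 ⟨d.2, hmc⟩)
      rw [this]
    · intro b hb c hc
      obtain ⟨b, rfl⟩ := (mem_toC _).1 hb
      obtain ⟨c, rfl⟩ := (mem_toC _).1 hc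
      exact π.noncrossing _ b.2 _ c.2
    · intro b hb c hc ho hn
      obtain ⟨b, rfl⟩ := (mem_toC _).1 hb
      obtain ⟨c, rfl⟩ := (mem_toC _).1 hc
      have := h1 b c ⟨c.2, b.2, ho, fun d hd hod => hn _ (mem_toC' ⟨d, hd⟩) hod⟩
      rw [ldepth_toC]
      constructor
      · intro hodd
        rw [if_pos hodd] at this
        simpa [relS] using this
      · intro hodd
        rw [if_neg hodd] at this
        simpa [relS] using this
    · intro b hb hn
      obtain ⟨b, rfl⟩ := (mem_toC _).1 hb
      have := h2 b (fun d hd => hn _ (mem_toC' ⟨d, hd⟩))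
      simpa [relS] using this

end

lemma NCP_ext {n : ℕ} {π π' : NCP n} (h : π.blocks = π'.blocks) : π = π' := by
  cases π; cases π'; cases h; rfl

lemma blocks_eq {n N : ℕ} (π : NCP n) (lab : {b : ℕ × ℕ // b ∈ π.blocks} → Fin N) (b : ℕ × ℕ) :
    b ∈ π.blocks ↔ ∃ c ∈ toC π lab, c.1 = b := by
  constructor
  · intro hb
    exact ⟨_, mem_toC' ⟨b, hb⟩, rfl⟩
  · rintro ⟨c, hc, rfl⟩
    obtain ⟨d, rfl⟩ := (mem_toC _).1 hc
    exact d.2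

lemma toC_inj {n N : ℕ} {π : NCP n} {lab lab' : {b : ℕ × ℕ // b ∈ π.blocks} → Fin N}
    (h : toC π lab = toC π lab') : lab = lab' := by
  funext b
  have := mem_toC' (lab := lab) b
  rw [h] at this
  obtain ⟨d, hd⟩ := (mem_toC _).1 this
  obtain ⟨e1, e2⟩ := Prod.ext_iff.1 hd
  have : d = b := Subtype.ext e1
  subst this
  exact e2.symm

lemma exists_toC {n N : ℕ} {s : Bool} {j : Fin N} {C : Finset (LBlk N)}
    (h : LSpec 0 (2*n) s j C) :
    ∃ (π : NCP n) (lab : {b : ℕ × ℕ // b ∈ π.blocks} → Fin N), toC π lab = C := by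
  classical
  have hinj : ∀ c ∈ C, ∀ d ∈ C, c.1 = d.1 → c = d := by
    intro c hc d hd e
    have := h.rg c hc
    exact (h.cover c.1.1 (by omega) (by omega)).unique ⟨hc, Or.inl rfl⟩ ⟨hd, Or.inl (by rw [e])⟩
  have hmem : ∀ b, b ∈ C.image Prod.fst ↔ ∃ i, (b, i) ∈ C := by
    intro b; simp
  let π : NCP n :=
    { blocks := C.image Prod.fst
      lt_of_mem := by
        intro b hb
        obtain ⟨i, hi⟩ := (hmem b).1 hb
        exact (h.rg _ hi).2.1
      mem_range := by
        intro b hb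
        obtain ⟨i, hi⟩ := (hmem b).1 hb
        have := h.rg _ hi
        simp only at this
        omega
      cover := by
        intro m h1 h2
        obtain ⟨c, ⟨hc, hm⟩, hu⟩ := h.cover m (by omega) (by omega)
        refine ⟨c.1, ⟨Finset.mem_image_of_mem _ hc, hm⟩, ?_⟩
        rintro b ⟨hb, hmb⟩
        obtain ⟨i, hi⟩ := (hmem b).1 hb
        exact congrArg Prod.fst (hu (b, i) ⟨hi, hmb⟩)
      noncrossing := by
        intro b hb c hc
        obtain ⟨i, hi⟩ := (hmem b).1 hb
        obtain ⟨k, hk⟩ := (hmem c).1 hc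
        exact h.nc _ hi _ hk }
  have hl : ∀ b : {b : ℕ × ℕ // b ∈ π.blocks}, ∃ i, (b.1, i) ∈ C := fun b => (hmem b.1).1 b.2
  choose lab hlab using hl
  refine ⟨π, lab, ?_⟩
  ext c
  rw [mem_toC]
  constructor
  · rintro ⟨b, rfl⟩
    exact hlab b
  · intro hc
    refine ⟨⟨c.1, Finset.mem_image_of_mem _ hc⟩, ?_⟩
    exact hinj _ (hlab ⟨c.1, Finset.mem_image_of_mem _ hc⟩) c hc rfl

open Classical in
theorem stmt_19 (n : ℕ) (hn : 1 ≤ n) :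
    Nat.card (Σ π : NCP n,
      {ℓ : Option {b : ℕ × ℕ // b ∈ π.blocks} ≃ Fin (n + 1) //
        (∀ b c : {b : ℕ × ℕ // b ∈ π.blocks}, NearestOuter π c.1 b.1 →
          if Odd (blockDepth π b.1) then ℓ (some b) < ℓ (some c)
          else ℓ (some c) < ℓ (some b)) ∧
        (∀ b : {b : ℕ × ℕ // b ∈ π.blocks},
          (∀ d ∈ π.blocks, ¬ IsOuter d b.1) → ℓ (some b) < ℓ none)})
      = n ^ n := by
  rw [← card_good n]
  refine Nat.card_eq_of_bijective (fun p => ⟨(p.2.1 none, toC p.1 (fun b => p.2.1 (some b))),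
    LSpec_toC (lab := fun b => p.2.1 (some b)) (p.2.1 none) |>.2 p.2.2, ?_⟩) ⟨?_, ?_⟩
  · constructor
    · intro c hc d hd e
      obtain ⟨b, rfl⟩ := (mem_toC _).1 hc
      obtain ⟨b', rfl⟩ := (mem_toC _).1 hd
      have := p.2.1.injective e
      simp only [Option.some.injEq] at this
      rw [this]
    · intro c hc e
      obtain ⟨b, rfl⟩ := (mem_toC _).1 hc
      have := p.2.1.injective e
      simp at this
  · rintro ⟨π, ℓ, hℓ⟩ ⟨π', ℓ', hℓ'⟩ h
    simp only [Subtype.mk.injEq, Prod.mk.injEq] at h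
    obtain ⟨h0, h1⟩ := h
    have hπ : π = π' := by
      apply NCP_ext
      ext b
      rw [blocks_eq π (fun b => ℓ (some b)), h1, ← blocks_eq π']
    subst hπ
    have h2 := toC_inj h1
    have : ℓ = ℓ' := by
      ext o
      cases o with
      | none => rw [h0]
      | some b => rw [congrFun h2 b]
    subst this
    rfl
  · rintro ⟨⟨j, C⟩, hC, hg⟩
    simp only at hC hg
    obtain ⟨π, lab, rfl⟩ := exists_toC hC
    have hcard : Fintype.card (Option {b : ℕ × ℕ // b ∈ π.blocks}) = Fintype.card (Fin (n+1)) := by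
      have := hC.card
      simp only [toC, Finset.card_map, Finset.card_attach] at this
      simp only [Fintype.card_option, Fintype.card_coe, Fintype.card_fin]
      omega
    let f : Option {b : ℕ × ℕ // b ∈ π.blocks} → Fin (n+1) := fun o => o.elim j lab
    have hf : Function.Injective f := by
      intro a b hab
      cases a with
      | none =>
        cases b with
        | none => rfl
        | some b => exact absurd hab.symm (hg.2 _ (mem_toC' b))
      | some a =>
        cases b with
        | none => exact absurd hab (hg.2 _ (mem_toC' a))
        | some b =>
          have := hg.1 (mem_toC' a) (mem_toC' b) hab
          exact congrArg some (Subtype.ext (Prod.ext_iff.1 this).1)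
    let ℓ := Equiv.ofBijective f ((Fintype.bijective_iff_injective_and_card f).2 ⟨hf, hcard⟩)
    exact ⟨⟨π, ℓ, (LSpec_toC (lab := lab) j).1 hC⟩, rfl⟩
end
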